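/- arXiv:2105.08984 — 6 statements merged into one kernel-verified Lean document; each statement's English description precedes it below -/
import Mathlib

section
/- Let V be a finite-dimensional vector space over a field K and let X be a nilpotent endomorphism of V having exactly b_k Jordan blocks of size k for 1 ≤ k ≤ q (equivalently, dim ker(X^p) = Σ_{k=1}^q min(k,p)·b_k for all p ≥ 0). Let c_1, …, c_q be nonnegative integers satisfying c_q + c_{q−1} + ⋯ + c_p ≤ b_q + b_{q−1} + ⋯ + b_p for every 1 ≤ p ≤ q. Then there exists a subspace L ⊆ V with X(L) ⊆ L such that the restriction X_L of X to L has exactly c_k Jordan blocks of size k for each k, i.e. dim ker(X_L^p) = Σ_{k=1}^q min(k,p)·c_k for all p ≥ 0; in particular dim L = Σ_{k=1}^q k·c_k. -/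
/-!
Jordan types are compared through their conjugate partitions. On an invariant subspace `M` the map
`X` has `w i = dim (M ⊓ ker X ^ (i + 1)) - dim (M ⊓ ker X ^ i)` nilpotent Jordan blocks of size
greater than `i`; on `M = ker X ^ q` these numbers dominate the corresponding numbers `c i`
prescribed for `L`. If `w (k + 1) < w k`, that is, if there is a block of size `k + 1`, then
`M ⊓ ker X ^ (k + 1)` is not contained in `(M ⊓ ker X ^ k) + X M`, so some hyperplane of `M`
contains the latter but not the former. It is invariant because it contains `X M`, and passing to it
lowers `w k` by one and leaves the other terms alone: one block of size `k + 1` is shortened. At the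
largest `k` with `c k < w k` such a block exists, because `w (k + 1) ≤ c (k + 1) ≤ c k < w k`, and
repeating this until `w = c` yields `L`.
-/

open Module LinearMap

theorem sum_Icc_min_smul {A : Type*} [AddCommMonoid A] (b : ℕ → A) (q p : ℕ) :
    ∑ k ∈ Finset.Icc 1 q, min k p • b k =
      ∑ i ∈ Finset.range p, ∑ k ∈ Finset.Icc (i + 1) q, b k := by
  calc ∑ k ∈ Finset.Icc 1 q, min k p • b k
      = ∑ k ∈ Finset.Icc 1 q, ∑ _i ∈ Finset.range (min k p), b k := by
        simp only [Finset.sum_const, Finset.card_range]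
    _ = ∑ i ∈ Finset.range p, ∑ k ∈ Finset.Icc (i + 1) q, b k :=
        Finset.sum_comm' fun k i => by simp only [Finset.mem_Icc, Finset.mem_range]; omega

theorem antitone_sum_Icc_succ {A : Type*} [AddCommMonoid A] [PartialOrder A] [IsOrderedAddMonoid A]
    [CanonicallyOrderedAdd A] (c : ℕ → A) (q : ℕ) :
    Antitone fun i => ∑ k ∈ Finset.Icc (i + 1) q, c k := fun _ _ hij =>
  Finset.sum_le_sum_of_subset (Finset.Icc_subset_Icc_left (Nat.succ_le_succ hij))

theorem exists_lt_and_succ_lt_of_antitone {α : Type*} [LinearOrder α] {c w : ℕ → α}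
    (hc : Antitone c) (hbdd : BddAbove {i | c i < w i}) (hne : ∃ i, c i < w i) :
    ∃ k, c k < w k ∧ w (k + 1) < w k := by
  have hmem : sSup {i | c i < w i} ∈ {i | c i < w i} := Nat.sSup_mem hne hbdd
  set k := sSup {i | c i < w i}
  have hsucc : w (k + 1) ≤ c (k + 1) :=
    not_lt.1 fun h => (Nat.lt_succ_self k).not_ge (le_csSup hbdd h)
  exact ⟨k, hmem, (hsucc.trans (hc k.le_succ)).trans_lt hmem⟩

section IteratedKernels

variable {R V : Type*} [Semiring R] [AddCommMonoid V] [Module R V] (X : End R V)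

theorem ker_pow_le_ker_pow {p r : ℕ} (h : p ≤ r) : ker (X ^ p) ≤ ker (X ^ r) :=
  X.iterateKer.monotone h

theorem inf_ker_pow_le_inf_ker_pow (M : Submodule R V) {p r : ℕ} (h : p ≤ r) :
    M ⊓ ker (X ^ p) ≤ M ⊓ ker (X ^ r) :=
  inf_le_inf_left M (ker_pow_le_ker_pow X h)

theorem ker_pow_succ (p : ℕ) : ker (X ^ (p + 1)) = (ker (X ^ p)).comap X := by
  rw [pow_succ, End.mul_eq_comp, ker_comp]

theorem ker_pow_mem_invtSubmodule (p : ℕ) : ker (X ^ p) ∈ X.invtSubmodule :=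
  (ker_pow_le_ker_pow X p.le_succ).trans_eq (ker_pow_succ X p)

theorem map_inf_ker_pow_succ (M : Submodule R V) (p : ℕ) :
    (M ⊓ ker (X ^ (p + 1))).map X = M.map X ⊓ ker (X ^ p) := by
  rw [Submodule.map_inf_eq_map_inf_comap, ker_pow_succ]

theorem finrank_ker_restrict_pow {L : Submodule R V} (hL : ∀ x ∈ L, X x ∈ L) (p : ℕ) :
    finrank R (ker (X.restrict hL ^ p)) = finrank R ↥(L ⊓ ker (X ^ p)) := by
  rw [End.pow_restrict, ker_restrict, ← Submodule.map_comap_subtype,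
    Submodule.finrank_map_subtype_eq]

end IteratedKernels

section Dimension

variable {K V : Type*} [DivisionRing K] [AddCommGroup V] [Module K V]

theorem finrank_map_add_finrank_inf_ker {W : Type*} [AddCommGroup W] [Module K W]
    (f : V →ₗ[K] W) (N : Submodule K V) [FiniteDimensional K N] :
    finrank K (N.map f) + finrank K ↥(N ⊓ ker f) = finrank K N := by
  rw [← range_domRestrict, ← Submodule.map_comap_subtype, Submodule.finrank_map_subtype_eq,
    ← ker_domRestrict, finrank_range_add_finrank_ker]

theorem finrank_inf_ker_add_one {f : V →ₗ[K] K} {N : Submodule K V} [FiniteDimensional K N]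
    (h : ¬N ≤ ker f) : finrank K ↥(N ⊓ ker f) + 1 = finrank K N := by
  have hmap : N.map f = ⊤ := (eq_bot_or_eq_top _).resolve_left (mt LinearMap.le_ker_iff_map.2 h)
  rw [← finrank_map_add_finrank_inf_ker f N, hmap, finrank_top, finrank_self, add_comm]

end Dimension

section Weyr

variable {K V : Type*} [DivisionRing K] [AddCommGroup V] [Module K V]

/-- The Weyr characteristic of `X` on an invariant subspace `M`, indexed from `0`: the number
`dim (M ⊓ ker X ^ (i + 1)) - dim (M ⊓ ker X ^ i)` of nilpotent Jordan blocks of `X` on `M` of size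
greater than `i`. It is the conjugate of the partition formed by the block sizes. The subtraction
does not truncate when `M` is finite-dimensional. -/
noncomputable def weyr (X : End K V) (M : Submodule K V) (i : ℕ) : ℕ :=
  finrank K ↥(M ⊓ ker (X ^ (i + 1))) - finrank K ↥(M ⊓ ker (X ^ i))

variable (X : End K V) (M : Submodule K V)

theorem monotone_finrank_inf_ker_pow [FiniteDimensional K M] :
    Monotone fun p => finrank K ↥(M ⊓ ker (X ^ p)) :=
  fun _ _ h => Submodule.finrank_mono (inf_ker_pow_le_inf_ker_pow X M h)

theorem finrank_inf_ker_pow_succ [FiniteDimensional K M] (i : ℕ) :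
    finrank K ↥(M ⊓ ker (X ^ (i + 1))) = finrank K ↥(M ⊓ ker (X ^ i)) + weyr X M i :=
  (Nat.add_sub_cancel' (monotone_finrank_inf_ker_pow X M i.le_succ)).symm

theorem sum_range_weyr [FiniteDimensional K M] (p : ℕ) :
    ∑ i ∈ Finset.range p, weyr X M i = finrank K ↥(M ⊓ ker (X ^ p)) := by
  have hzero : M ⊓ ker (X ^ 0) = ⊥ := by
    rw [pow_zero, End.one_eq_id, ker_id, inf_bot_eq]
  refine (Finset.sum_range_tsub (monotone_finrank_inf_ker_pow X M) p).trans ?_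
  rw [hzero, finrank_bot, Nat.sub_zero]

theorem exists_forall_ge_weyr_eq_zero [FiniteDimensional K M] :
    ∃ n, ∀ i ≥ n, weyr X M i = 0 := by
  obtain ⟨n, hn⟩ := monotone_stabilizes_iff_noetherian.2 inferInstance
    ⟨fun i => (ker (X ^ i)).comap M.subtype,
      fun _ _ h => Submodule.comap_mono (ker_pow_le_ker_pow X h)⟩
  have hstable : ∀ i ≥ n, M ⊓ ker (X ^ i) = M ⊓ ker (X ^ n) := fun i hi => by
    rw [← Submodule.map_comap_subtype, ← Submodule.map_comap_subtype]
    exact congrArg (Submodule.map M.subtype) (hn i hi).symm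
  refine ⟨n, fun i hi => ?_⟩
  rw [weyr, hstable i hi, hstable (i + 1) (hi.trans i.le_succ), Nat.sub_self]

theorem weyr_ker_pow {i q : ℕ} (hi : i < q) :
    weyr X (ker (X ^ q)) i = finrank K (ker (X ^ (i + 1))) - finrank K (ker (X ^ i)) := by
  rw [weyr, inf_eq_right.2 (ker_pow_le_ker_pow X hi),
    inf_eq_right.2 (ker_pow_le_ker_pow X hi.le)]

theorem finrank_map_inf_ker_pow [FiniteDimensional K M] (p : ℕ) :
    finrank K ↥(M.map X ⊓ ker (X ^ p)) + finrank K ↥(M ⊓ ker X) =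
      finrank K ↥(M ⊓ ker (X ^ (p + 1))) := by
  have hker : ker X ≤ ker (X ^ (p + 1)) := by
    simpa only [pow_one] using ker_pow_le_ker_pow X (Nat.le_add_left 1 p)
  rw [← finrank_map_add_finrank_inf_ker X (M ⊓ ker (X ^ (p + 1))), map_inf_ker_pow_succ, inf_assoc,
    inf_eq_right.2 hker]

variable {X M}

theorem finrank_inf_ker_pow_inf_sup_map [FiniteDimensional K M] (hM : M ∈ X.invtSubmodule) (k : ℕ) :
    finrank K ↥((M ⊓ ker (X ^ (k + 1))) ⊓ (M ⊓ ker (X ^ k) ⊔ M.map X)) =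
      finrank K ↥(M ⊓ ker (X ^ k)) + weyr X M (k + 1) := by
  have hmap : M.map X ≤ M := (End.mem_invtSubmodule_iff_map_le X).1 hM
  have hinf (p : ℕ) : (M ⊓ ker (X ^ p)) ⊓ M.map X = M.map X ⊓ ker (X ^ p) := by
    rw [inf_right_comm, inf_eq_right.2 hmap]
  have hmodular : (M ⊓ ker (X ^ (k + 1))) ⊓ (M ⊓ ker (X ^ k) ⊔ M.map X) =
      M ⊓ ker (X ^ k) ⊔ M.map X ⊓ ker (X ^ (k + 1)) := by
    rw [sup_comm _ (M.map X),
      ← inf_sup_assoc_of_le _ (inf_ker_pow_le_inf_ker_pow X M k.le_succ), hinf, sup_comm]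
  have hinter : (M ⊓ ker (X ^ k)) ⊓ (M.map X ⊓ ker (X ^ (k + 1))) = M.map X ⊓ ker (X ^ k) := by
    rw [← inf_assoc, hinf, inf_assoc, inf_eq_left.2 (ker_pow_le_ker_pow X k.le_succ)]
  have hsum := Submodule.finrank_sup_add_finrank_inf_eq
    (M ⊓ ker (X ^ k)) (M.map X ⊓ ker (X ^ (k + 1)))
  rw [hinter] at hsum
  rw [hmodular]
  have hdim := finrank_map_inf_ker_pow X M k
  have hdim_succ := finrank_map_inf_ker_pow X M (k + 1)
  have hweyr := finrank_inf_ker_pow_succ X M (k + 1)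
  omega

theorem not_inf_ker_pow_succ_le_sup_map [FiniteDimensional K M] (hM : M ∈ X.invtSubmodule) {k : ℕ}
    (hk : weyr X M (k + 1) < weyr X M k) :
    ¬M ⊓ ker (X ^ (k + 1)) ≤ M ⊓ ker (X ^ k) ⊔ M.map X := fun hle => by
  have hfinrank := finrank_inf_ker_pow_inf_sup_map hM k
  rw [inf_eq_left.2 hle, finrank_inf_ker_pow_succ, Nat.add_left_cancel_iff] at hfinrank
  exact hk.ne' hfinrank

theorem weyr_inf_ker [FiniteDimensional K M] {f : V →ₗ[K] K} {k : ℕ}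
    (hk : M ⊓ ker (X ^ k) ≤ ker f) (hk_succ : ¬M ⊓ ker (X ^ (k + 1)) ≤ ker f) :
    weyr X (M ⊓ ker f) = Function.update (weyr X M) k (weyr X M k - 1) := by
  have hlow : ∀ p ≤ k, finrank K ↥(M ⊓ ker f ⊓ ker (X ^ p)) = finrank K ↥(M ⊓ ker (X ^ p)) := by
    intro p hp
    rw [inf_right_comm, inf_eq_left.2 ((inf_ker_pow_le_inf_ker_pow X M hp).trans hk)]
  have hhigh : ∀ p > k,
      finrank K ↥(M ⊓ ker f ⊓ ker (X ^ p)) + 1 = finrank K ↥(M ⊓ ker (X ^ p)) := by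
    intro p hp
    rw [inf_right_comm]
    exact finrank_inf_ker_add_one fun h => hk_succ ((inf_ker_pow_le_inf_ker_pow X M hp).trans h)
  funext i
  rcases lt_trichotomy i k with hi | rfl | hi
  · rw [Function.update_of_ne hi.ne, weyr, weyr, hlow i hi.le, hlow (i + 1) hi]
  · rw [Function.update_self, weyr, weyr, hlow i le_rfl, ← hhigh (i + 1) i.lt_succ_self]
    omega
  · rw [Function.update_of_ne hi.ne', weyr, weyr, ← hhigh i hi, ← hhigh (i + 1) (by omega),
      Nat.add_sub_add_right]

theorem exists_lt_weyr_eq_update [FiniteDimensional K M] (hM : M ∈ X.invtSubmodule) {k : ℕ}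
    (hk : weyr X M (k + 1) < weyr X M k) :
    ∃ M' < M, M' ∈ X.invtSubmodule ∧
      weyr X M' = Function.update (weyr X M) k (weyr X M k - 1) := by
  obtain ⟨v, hv, hvnot⟩ := SetLike.not_le_iff_exists.1 (not_inf_ker_pow_succ_le_sup_map hM hk)
  obtain ⟨f, hfv, hf⟩ := Submodule.exists_le_ker_of_notMem hvnot
  obtain ⟨hker, hmap⟩ := sup_le_iff.1 hf
  refine ⟨M ⊓ ker f, inf_lt_left.2 fun h => hfv (h hv.1), fun x hx => ⟨hM hx.1, ?_⟩,
    weyr_inf_ker hker fun h => hfv (h hv)⟩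
  exact hmap (Submodule.mem_map_of_mem hx.1)

theorem exists_le_weyr_eq [FiniteDimensional K M] (hM : M ∈ X.invtSubmodule) {c : ℕ → ℕ}
    (hc : Antitone c) (hle : c ≤ weyr X M) : ∃ L ≤ M, L ∈ X.invtSubmodule ∧ weyr X L = c := by
  induction hd : finrank K M using Nat.strong_induction_on generalizing M with
  | _ d ih =>
    subst hd
    rcases hle.eq_or_lt with heq | hlt
    · exact ⟨M, le_rfl, hM, heq.symm⟩
    obtain ⟨n, hn⟩ := exists_forall_ge_weyr_eq_zero X M
    have hbdd : BddAbove {i | c i < weyr X M i} :=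
      ⟨n, fun i hi => le_of_not_ge fun hni => (Nat.zero_le _).not_gt (hi.trans_eq (hn i hni))⟩
    obtain ⟨k, hck, hk⟩ := exists_lt_and_succ_lt_of_antitone hc hbdd (Pi.lt_def.1 hlt).2
    obtain ⟨M', hlt', hM', hweyr⟩ := exists_lt_weyr_eq_update hM hk
    have := Submodule.finiteDimensional_of_le hlt'.le
    have hle' : c ≤ weyr X M' := by
      rw [hweyr, le_update_iff]
      exact ⟨Nat.le_sub_one_of_lt hck, fun i _ => hle i⟩
    obtain ⟨L, hL, hL'⟩ := ih _ (Submodule.finrank_lt_finrank_of_lt hlt') hM' hle' rfl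
    exact ⟨L, hL.trans hlt'.le, hL'⟩

end Weyr

open Finset in
/-- Since `hb` only ranges over `p ≤ q`, the number `b q` counts the blocks of size at least `q`. -/
theorem exists_invariant_subspace_of_jordan_type_general
    {K V : Type*} [DivisionRing K] [AddCommGroup V] [Module K V] (X : Module.End K V) (q : ℕ)
    [FiniteDimensional K (LinearMap.ker (X ^ q))] (b c : ℕ → ℕ)
    (hb : ∀ p ≤ q, finrank K (LinearMap.ker (X ^ p)) = ∑ k ∈ Icc 1 q, min k p * b k)
    (hc : ∀ p ∈ Icc 1 q, ∑ k ∈ Icc p q, c k ≤ ∑ k ∈ Icc p q, b k) :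
    ∃ L : Submodule K V, ∃ hL : ∀ x ∈ L, X x ∈ L,
      (∀ p : ℕ, finrank K (LinearMap.ker (X.restrict hL ^ p)) = ∑ k ∈ Icc 1 q, min k p * c k) ∧
      finrank K L = ∑ k ∈ Icc 1 q, k * c k := by
  simp only [← smul_eq_mul, sum_Icc_min_smul] at hb
  have hweyr_ker : ∀ i < q, weyr X (ker (X ^ q)) i = ∑ k ∈ Icc (i + 1) q, b k := fun i hi => by
    rw [weyr_ker_pow X hi, hb (i + 1) hi, hb i hi.le, sum_range_succ, Nat.add_sub_cancel_left]
  have hle : (fun i => ∑ k ∈ Icc (i + 1) q, c k) ≤ weyr X (ker (X ^ q)) := fun i => by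
    rcases lt_or_ge i q with hi | hi
    · exact (hc (i + 1) (mem_Icc.2 ⟨i.succ_pos, hi⟩)).trans_eq (hweyr_ker i hi).symm
    · simp only [Icc_eq_empty_of_lt (Nat.lt_succ_of_le hi), sum_empty, Nat.zero_le]
  obtain ⟨L, hLker, hL, hweyr⟩ :=
    exists_le_weyr_eq (ker_pow_mem_invtSubmodule X q) (antitone_sum_Icc_succ c q) hle
  have := Submodule.finiteDimensional_of_le hLker
  have hdim (p : ℕ) : finrank K ↥(L ⊓ ker (X ^ p)) = ∑ k ∈ Icc 1 q, min k p * c k := by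
    simp only [← sum_range_weyr, hweyr, ← smul_eq_mul, sum_Icc_min_smul]
  refine ⟨L, hL, fun p => (finrank_ker_restrict_pow X hL p).trans (hdim p), ?_⟩
  rw [← inf_eq_left.2 hLker, hdim q]
  exact sum_congr rfl fun k hk => by rw [min_eq_left (mem_Icc.1 hk).2]

open Finset in
/-- Existence of invariant subspaces of prescribed Jordan type: if a nilpotent endomorphism
`X` has `b k` Jordan blocks of size `k` for `1 ≤ k ≤ q`, and nonnegative integers `c k`
satisfy `c q + ⋯ + c p ≤ b q + ⋯ + b p` for all `1 ≤ p ≤ q`, then there is an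
`X`-invariant subspace `L` on which `X` restricts with exactly `c k` Jordan blocks of
size `k`; in particular `dim L = ∑ k, k * c k`. -/
theorem exists_invariant_subspace_of_jordan_type
    (K : Type*) [Field K] (V : Type*) [AddCommGroup V] [Module K V]
    [FiniteDimensional K V] (X : Module.End K V) (hX : IsNilpotent X)
    (q : ℕ) (b c : ℕ → ℕ)
    (hb : ∀ p : ℕ, Module.finrank K (LinearMap.ker (X ^ p)) =
      ∑ k ∈ Icc 1 q, min k p * b k)
    (hc : ∀ p ∈ Icc 1 q, ∑ k ∈ Icc p q, c k ≤ ∑ k ∈ Icc p q, b k) :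
    ∃ L : Submodule K V, ∃ hL : ∀ x ∈ L, X x ∈ L,
      (∀ p : ℕ, Module.finrank K (LinearMap.ker ((X.restrict hL) ^ p)) =
        ∑ k ∈ Icc 1 q, min k p * c k) ∧
      Module.finrank K L = ∑ k ∈ Icc 1 q, k * c k :=
  exists_invariant_subspace_of_jordan_type_general X q b c (fun p _ => hb p) hc
end

section
/- Let U and V be finite-dimensional complex vector spaces of dimensions u and v with u ≥ v ≥ 1. Let X be a regular nilpotent endomorphism of U and Y a regular nilpotent endomorphism of V, and let Z be the endomorphism of U ⊗ V given by Z = X ⊗ id_V + id_U ⊗ Y. Then Z is nilpotent with exactly v Jordan blocks, of sizes u−v+1, u−v+3, …, u+v−3, u+v−1; equivalently, for every p ≥ 0, dim ker(Z^p) = Σ_{j=1}^{v} min(p, u−v−1+2j). -/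
/-!
Complete `X` and `Y` to `sl₂`-triples having `X` and `Y` as raising operators; then
`Z = X ⊗ id + id ⊗ Y` is the raising operator of an `sl₂`-action on `U ⊗ V`. If `x₀, x₁, …` and
`y₀, y₁, …` are bases with `X xᵢ₊₁ = xᵢ`, `Y yⱼ₊₁ = yⱼ` and `X x₀ = 0 = Y y₀`, then for each
`d < min u v` the vector `∑_{i+j=d} (-1)ⁱ xᵢ ⊗ yⱼ` is annihilated by `Z` (the sum telescopes) and
has weight `u + v - 2 - 2d`. By `sl₂`-theory it therefore lies in the range of
`Z ^ (u + v - 2 - 2d)`. These vectors have distinct weights, so they are linearly independent, and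
the sizes `u + v - 1 - 2d` add up to `u v = dim (U ⊗ V)`, which leaves no room for any further
Jordan block.
-/

section JordanType

open Module TensorProduct
open Finset.HasAntidiagonal (antidiagonal mem_antidiagonal)
open LinearMap (ker range)

section KernelsOfPowers

variable {K V W ι : Type*} [DivisionRing K] [AddCommGroup V] [Module K V]
  [AddCommGroup W] [Module K W]

theorem finrank_comap_eq_finrank_range_inf_add_finrank_ker [FiniteDimensional K V]
    (f : V →ₗ[K] W) (p : Submodule K W) :
    finrank K (p.comap f) = finrank K ↥(range f ⊓ p) + finrank K (ker f) := by
  rw [← LinearMap.finrank_range_add_finrank_ker (f.domRestrict (p.comap f)),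
    LinearMap.range_domRestrict, Submodule.map_comap_eq, LinearMap.ker_domRestrict,
    (Submodule.comapSubtypeEquivOfLe (LinearMap.ker_le_comap f)).finrank_eq]

variable [FiniteDimensional K W] [Fintype ι] {Z : Module.End K W} {s : ι → ℕ} {b : ι → W}

theorem card_lt_add_finrank_ker_pow_le_finrank_ker_pow_succ (hb : LinearIndependent K b)
    (hker : ∀ i, b i ∈ ker Z) (hrange : ∀ i, b i ∈ range (Z ^ (s i - 1))) (p : ℕ) :
    Fintype.card {i // p < s i} + finrank K (ker (Z ^ p)) ≤ finrank K (ker (Z ^ (p + 1))) := by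
  have hmem (i : {i // p < s i}) : b i ∈ range (Z ^ p) ⊓ ker Z :=
    ⟨Z.iterateRange.monotone (Nat.le_sub_one_of_lt i.2) (hrange i), hker i⟩
  have hli : LinearIndependent K fun i : {i // p < s i} ↦
      (⟨b i, hmem i⟩ : ↥(range (Z ^ p) ⊓ ker Z)) :=
    .of_comp (Submodule.subtype _) (hb.comp _ Subtype.val_injective)
  rw [pow_succ', Module.End.mul_eq_comp, LinearMap.ker_comp,
    finrank_comap_eq_finrank_range_inf_add_finrank_ker]
  exact Nat.add_le_add_right hli.fintype_card_le_finrank _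

theorem finrank_ker_pow_eq_sum_min (hb : LinearIndependent K b) (hker : ∀ i, b i ∈ ker Z)
    (hrange : ∀ i, b i ∈ range (Z ^ (s i - 1))) (hs : ∑ i, s i = finrank K W) (p : ℕ) :
    finrank K (ker (Z ^ p)) = ∑ i, min p (s i) := by
  let minSum (q : ℕ) : ℕ := ∑ i, min q (s i)
  let excess (q : ℕ) : ℤ := finrank K (ker (Z ^ q)) - minSum q
  have hmono : Monotone excess := monotone_nat_of_le_succ fun q ↦ by
    have hsucc : minSum (q + 1) = Fintype.card {i // q < s i} + minSum q := by
      rw [Fintype.card_subtype, Finset.card_filter, ← Finset.sum_add_distrib]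
      exact Finset.sum_congr rfl fun i _ ↦ by split_ifs <;> omega
    have := card_lt_add_finrank_ker_pow_le_finrank_ker_pow_succ hb hker hrange q
    simp only [excess]
    omega
  have hzero : excess 0 = 0 := by simp [excess, minSum, Module.End.one_eq_id]
  have hlarge : excess (p + ∑ i, s i) ≤ 0 := by
    have hmin : minSum (p + ∑ i, s i) = finrank K W := by
      rw [← hs]
      exact Finset.sum_congr rfl fun i hi ↦ min_eq_right <|
        (Finset.single_le_sum (fun j _ ↦ Nat.zero_le (s j)) hi).trans (Nat.le_add_left _ _)
    have := (ker (Z ^ (p + ∑ i, s i))).finrank_le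
    simp only [excess]
    omega
  have hnonneg : 0 ≤ excess p := hzero ▸ hmono p.zero_le
  have hnonpos : excess p ≤ 0 := (hmono (Nat.le_add_right _ _)).trans hlarge
  exact Nat.cast_injective (R := ℤ) (sub_eq_zero.1 (le_antisymm hnonpos hnonneg))

end KernelsOfPowers

section TensorSum

variable {K U V : Type*} [CommRing K] [AddCommGroup U] [Module K U] [AddCommGroup V] [Module K V]

/-- The sum `X ⊗ id + id ⊗ Y`, through which a Lie algebra acts on a tensor product of two
representations. -/
def tensorSum (X : Module.End K U) (Y : Module.End K V) : Module.End K (U ⊗[K] V) :=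
  TensorProduct.map X LinearMap.id + TensorProduct.map LinearMap.id Y

theorem tensorSum_tmul (X : Module.End K U) (Y : Module.End K V) (x : U) (y : V) :
    tensorSum X Y (x ⊗ₜ y) = X x ⊗ₜ y + x ⊗ₜ Y y :=
  rfl

theorem lie_tensorSum (X X' : Module.End K U) (Y Y' : Module.End K V) :
    ⁅tensorSum X Y, tensorSum X' Y'⁆ = tensorSum ⁅X, X'⁆ ⁅Y, Y'⁆ := by
  refine TensorProduct.ext' fun x y ↦ ?_
  simp only [Ring.lie_def, Module.End.mul_apply, LinearMap.sub_apply, tensorSum_tmul, map_add,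
    sub_tmul, tmul_sub]
  abel

theorem tensorSum_nsmul (n : ℕ) (X : Module.End K U) (Y : Module.End K V) :
    tensorSum (n • X) (n • Y) = n • tensorSum X Y := by
  refine TensorProduct.ext' fun x y ↦ ?_
  simp only [LinearMap.smul_apply, tensorSum_tmul, smul_add, smul_tmul', tmul_smul]

theorem isNilpotent_tensorSum {X : Module.End K U} {Y : Module.End K V} (hX : IsNilpotent X)
    (hY : IsNilpotent Y) : IsNilpotent (tensorSum X Y) := by
  have hcomm : Commute (X.rTensor V) (Y.lTensor U) := TensorProduct.ext' fun _ _ ↦ rfl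
  obtain ⟨m, hm⟩ := hX
  obtain ⟨n, hn⟩ := hY
  exact hcomm.isNilpotent_add ⟨m, by rw [LinearMap.rTensor_pow, hm, LinearMap.rTensor_zero]⟩
    ⟨n, by rw [LinearMap.lTensor_pow, hn, LinearMap.lTensor_zero]⟩

end TensorSum

section Sl2

attribute [local instance] LieRing.ofAssociativeRing

/-- The defining relations of `sl₂` for three endomorphisms. Unlike `IsSl2Triple` this allows
`h = 0`, which is what happens for the trivial representation. -/
structure IsSl2Representation {K W : Type*} [CommRing K] [AddCommGroup W] [Module K W]
    (h e f : Module.End K W) : Prop where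
  lie_e_f : ⁅e, f⁆ = h
  lie_h_e : ⁅h, e⁆ = 2 • e
  lie_f_h : ⁅f, h⁆ = 2 • f

theorem IsSl2Representation.tensorSum {K U V : Type*} [CommRing K] [AddCommGroup U] [Module K U]
    [AddCommGroup V] [Module K V] {h e f : Module.End K U} {h' e' f' : Module.End K V}
    (t : IsSl2Representation h e f) (t' : IsSl2Representation h' e' f') :
    IsSl2Representation (tensorSum h h') (tensorSum e e') (tensorSum f f') where
  lie_e_f := by rw [lie_tensorSum, t.lie_e_f, t'.lie_e_f]
  lie_h_e := by rw [lie_tensorSum, t.lie_h_e, t'.lie_h_e, tensorSum_nsmul]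
  lie_f_h := by rw [lie_tensorSum, t.lie_f_h, t'.lie_f_h, tensorSum_nsmul]

variable {K : Type*} [Field K] [CharZero K]

theorem exists_toEnd_pow_toEnd_pow_eq_smul {L M : Type*} [LieRing L] [LieAlgebra K L]
    [AddCommGroup M] [Module K M] [LieRingModule L M] [LieModule K L M] {h e f : L}
    {t : IsSl2Triple h e f} {m : M} {n : ℕ} (P : t.HasPrimitiveVectorWith m (n : K)) {k : ℕ}
    (hk : k ≤ n) :
    ∃ c : K, c ≠ 0 ∧
      (LieModule.toEnd K L M e ^ k) ((LieModule.toEnd K L M f ^ k) m) = c • m := by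
  induction k with
  | zero => exact ⟨1, one_ne_zero, by simp⟩
  | succ k ih =>
    obtain ⟨c, hc, hck⟩ := ih (by omega)
    have hk' : (n : K) - k ≠ 0 := sub_ne_zero.2 (Nat.cast_injective.ne (by omega))
    refine ⟨(k + 1) * (n - k) * c, mul_ne_zero (mul_ne_zero k.cast_add_one_ne_zero hk') hc, ?_⟩
    rw [pow_succ (LieModule.toEnd K L M e), Module.End.mul_apply, LieModule.toEnd_apply_apply,
      P.lie_e_pow_succ_toEnd_f, map_smul, hck, smul_smul]

theorem IsSl2Representation.mem_range_pow {W : Type*} [AddCommGroup W] [Module K W]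
    {h e f : Module.End K W} (t : IsSl2Representation h e f) {m : W} {n : ℕ}
    (hm : h m = (n : K) • m) (he : e m = 0) : m ∈ range (e ^ n) := by
  rcases eq_or_ne n 0 with rfl | hn
  · exact ⟨m, rfl⟩
  rcases eq_or_ne m 0 with rfl | hm0
  · exact zero_mem _
  have hh : h ≠ 0 := by
    rintro rfl
    exact smul_ne_zero (Nat.cast_ne_zero.2 hn) hm0 hm.symm
  have triple : IsSl2Triple h e f := ⟨hh, t.lie_e_f, t.lie_h_e, by rw [← lie_skew, t.lie_f_h]⟩
  have P : triple.HasPrimitiveVectorWith m (n : K) := ⟨hm0, hm, he⟩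
  obtain ⟨c, hc, hcm⟩ := exists_toEnd_pow_toEnd_pow_eq_smul P le_rfl
  rw [← Submodule.smul_mem_iff _ hc, ← hcm]
  exact LinearMap.mem_range_self (e ^ n) _

end Sl2

section JordanChains

variable {K U V : Type*} [Field K] [AddCommGroup U] [Module K U] [AddCommGroup V] [Module K V]

/-- `x 0, …, x (n - 1)` is a Jordan chain of `X` for the eigenvalue `0`, listed from the
eigenvector `x 0` upwards. The values `x j` with `n ≤ j` are irrelevant. -/
structure IsJordanChain (X : Module.End K U) (n : ℕ) (x : ℕ → U) : Prop where
  ne_zero : x 0 ≠ 0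
  apply_zero : X (x 0) = 0
  apply_succ : ∀ j, j + 1 < n → X (x (j + 1)) = x j

/-- `X` is nilpotent with a single Jordan block. -/
def IsRegularNilpotent (X : Module.End K U) : Prop :=
  X ^ finrank K U = 0 ∧ X ^ (finrank K U - 1) ≠ 0

namespace IsRegularNilpotent

variable {X : Module.End K U}

theorem finrank_pos (hX : IsRegularNilpotent X) : 0 < finrank K U := by
  by_contra h
  obtain ⟨h0, h1⟩ := hX
  exact h1 (by rwa [show finrank K U - 1 = finrank K U by omega])

theorem finiteDimensional (hX : IsRegularNilpotent X) : FiniteDimensional K U :=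
  Module.finite_of_finrank_pos hX.finrank_pos

theorem exists_isJordanChain (hX : IsRegularNilpotent X) :
    ∃ x : ℕ → U, IsJordanChain X (finrank K U) x := by
  obtain ⟨g, hg⟩ := DFunLike.ne_iff.1 hX.2
  refine ⟨fun j ↦ (X ^ (finrank K U - 1 - j)) g, hg, ?_, fun j hj ↦ ?_⟩
  · rw [← Module.End.mul_apply, ← pow_succ', Nat.sub_zero, Nat.sub_add_cancel hX.finrank_pos,
      hX.1, LinearMap.zero_apply]
  · rw [← Module.End.mul_apply, ← pow_succ']
    congr 2
    omega

end IsRegularNilpotent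

namespace IsJordanChain

variable {X : Module.End K U} {n : ℕ} {x : ℕ → U}

theorem pow_apply_self (hx : IsJordanChain X n x) {j : ℕ} (hj : j < n) : (X ^ j) (x j) = x 0 := by
  induction j with
  | zero => rfl
  | succ j ih => rw [pow_succ, Module.End.mul_apply, hx.apply_succ j hj, ih (by omega)]

theorem pow_apply_eq_zero (hx : IsJordanChain X n x) {j k : ℕ} (hj : j < n) (hjk : j < k) :
    (X ^ k) (x j) = 0 := by
  obtain ⟨i, rfl⟩ := Nat.exists_eq_add_of_le hjk
  rw [add_comm, pow_add, Module.End.mul_apply, pow_succ', Module.End.mul_apply,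
    hx.pow_apply_self hj, hx.apply_zero, map_zero]

theorem linearIndependent (hx : IsJordanChain X n x) :
    LinearIndependent K fun j : Fin n ↦ x j := by
  suffices ∀ m ≤ n, LinearIndependent K fun j : Fin m ↦ x j from this n le_rfl
  intro m
  induction m with
  | zero => exact fun _ ↦ linearIndependent_empty_type
  | succ m ih =>
    refine fun hm ↦ linearIndependent_finSucc'.2 ⟨ih (by omega), fun hspan ↦ hx.ne_zero ?_⟩
    have hle : Submodule.span K (Set.range fun j : Fin m ↦ x j) ≤ ker (X ^ m) := by
      rw [Submodule.span_le]
      rintro _ ⟨j, rfl⟩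
      exact hx.pow_apply_eq_zero (by omega) j.2
    rw [← hx.pow_apply_self hm]
    exact hle hspan

theorem existsUnique_end_apply_eq [FiniteDimensional K U] (hx : IsJordanChain X (finrank K U) x)
    (y : ℕ → U) : ∃! T : Module.End K U, ∀ j < finrank K U, T (x j) = y j := by
  let b := basisOfLinearIndependentOfCardEqFinrank' _ hx.linearIndependent (Fintype.card_fin _)
  have hb (j : Fin (finrank K U)) : b j = x j := by simp [b]
  refine ⟨b.constr K fun j ↦ y j, fun j hj ↦ ?_, fun T hT ↦ b.ext fun j ↦ ?_⟩
  · rw [← hb ⟨j, hj⟩, b.constr_basis]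
  · rw [b.constr_basis, hb, hT j j.2]

theorem isSl2Representation [FiniteDimensional K U] (hx : IsJordanChain X (finrank K U) x)
    {h f : Module.End K U}
    (hh : ∀ j < finrank K U, h (x j) = (finrank K U - 1 - 2 * j : K) • x j)
    (hf : ∀ j < finrank K U, f (x j) = ((j + 1) * (finrank K U - 1 - j) : K) • x (j + 1)) :
    IsSl2Representation h X f := by
  have hext {S T : Module.End K U} (hST : ∀ j < finrank K U, S (x j) = T (x j)) : S = T :=
    (hx.existsUnique_end_apply_eq fun j ↦ T (x j)).unique hST fun _ _ ↦ rfl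
  have htop {j : ℕ} (hj : j < finrank K U) :
      j + 1 < finrank K U ∨ (finrank K U - 1 - j : K) = 0 := by
    refine (Nat.lt_or_eq_of_le hj).imp_right fun hju ↦ ?_
    rw [← hju]
    push_cast
    ring
  refine ⟨hext fun j hj ↦ ?_, hext fun j hj ↦ ?_, hext fun j hj ↦ ?_⟩ <;>
    simp only [Ring.lie_def, LinearMap.sub_apply, LinearMap.smul_apply, Module.End.mul_apply]
  · have hXf : X (f (x j)) = ((j + 1) * (finrank K U - 1 - j) : K) • x j := by
      rw [hf j hj, map_smul]
      rcases htop hj with hj' | hj'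
      · rw [hx.apply_succ j hj']
      · rw [hj', mul_zero, zero_smul, zero_smul]
    rw [hXf, hh j hj]
    cases j with
    | zero => simp [hx.apply_zero]
    | succ j =>
      rw [hx.apply_succ j hj, hf j (by omega)]
      push_cast
      module
  · rw [hh j hj, map_smul]
    cases j with
    | zero => simp [hx.apply_zero]
    | succ j =>
      rw [hx.apply_succ j hj, hh j (by omega)]
      push_cast
      module
  · rw [hh j hj, hf j hj, map_smul, map_smul, hf j hj]
    rcases htop hj with hj' | hj'
    · rw [hh _ hj']
      push_cast
      module
    · simp [hj']

theorem exists_isSl2Representation [FiniteDimensional K U]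
    (hx : IsJordanChain X (finrank K U) x) :
    ∃ h f : Module.End K U, IsSl2Representation h X f ∧
      ∀ j < finrank K U, h (x j) = (finrank K U - 1 - 2 * j : K) • x j := by
  obtain ⟨h, hh, -⟩ := hx.existsUnique_end_apply_eq fun j ↦ (finrank K U - 1 - 2 * j : K) • x j
  obtain ⟨f, hf, -⟩ := hx.existsUnique_end_apply_eq fun j ↦
    ((j + 1) * (finrank K U - 1 - j) : K) • x (j + 1)
  exact ⟨h, f, hx.isSl2Representation hh hf, hh⟩

end IsJordanChain

/-- For Jordan chains `x` and `y` of raising operators `X` and `Y`, the highest weight vector of the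
`d`-th irreducible summand in the Clebsch–Gordan decomposition; its coefficients are just signs
because `x` and `y` are normalised by `X (x (i + 1)) = x i`, `Y (y (j + 1)) = y j`. -/
def highestWeightVector (K : Type*) {U V : Type*} [CommRing K] [AddCommGroup U] [Module K U]
    [AddCommGroup V] [Module K V] (x : ℕ → U) (y : ℕ → V) (d : ℕ) : U ⊗[K] V :=
  ∑ p ∈ antidiagonal d, (-1 : K) ^ p.1 • (x p.1 ⊗ₜ y p.2)

section HighestWeightVector

variable {m n d : ℕ} {x : ℕ → U} {y : ℕ → V}

theorem highestWeightVector_ne_zero (hx : LinearIndependent K fun i : Fin m ↦ x i)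
    (hy : LinearIndependent K fun j : Fin n ↦ y j) (hm : d < m) (hn : d < n) :
    highestWeightVector K x y d ≠ 0 := by
  intro hzero
  let toPair (p : antidiagonal d) : Fin m × Fin n :=
    have hp := mem_antidiagonal.1 p.2
    (⟨p.1.1, by omega⟩, ⟨p.1.2, by omega⟩)
  have htoPair : Function.Injective toPair := fun p q hpq ↦
    Subtype.ext (Prod.ext (congrArg (·.1.1) hpq) (congrArg (·.2.1) hpq))
  have hli : LinearIndependent K fun p : antidiagonal d ↦ x p.1.1 ⊗ₜ[K] y p.1.2 :=
    (hx.tmul_of_isDomain hy).comp toPair htoPair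
  rw [highestWeightVector, ← Finset.sum_coe_sort] at hzero
  have hcoeff := Fintype.linearIndependent_iff.1 hli (fun p ↦ (-1) ^ p.1.1) hzero
    ⟨(0, d), mem_antidiagonal.2 (zero_add d)⟩
  simp at hcoeff

theorem tensorSum_highestWeightVector_eq_zero {X : Module.End K U} {Y : Module.End K V}
    (hx : IsJordanChain X m x) (hy : IsJordanChain Y n y) (hm : d < m) (hn : d < n) :
    tensorSum X Y (highestWeightVector K x y d) = 0 := by
  simp only [highestWeightVector, map_sum, map_smul, tensorSum_tmul, smul_add,
    Finset.sum_add_distrib]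
  cases d with
  | zero => simp [hx.apply_zero, hy.apply_zero]
  | succ d =>
    rw [Finset.Nat.sum_antidiagonal_succ, Finset.Nat.sum_antidiagonal_succ', hx.apply_zero,
      hy.apply_zero, zero_tmul, tmul_zero, smul_zero, smul_zero, zero_add, zero_add,
      ← Finset.sum_add_distrib]
    refine Finset.sum_eq_zero fun p hp ↦ ?_
    rw [mem_antidiagonal] at hp
    rw [hx.apply_succ _ (by omega), hy.apply_succ _ (by omega), pow_succ]
    module

theorem tensorSum_highestWeightVector_eq_smul {h : Module.End K U} {h' : Module.End K V}
    (hh : ∀ i < m, h (x i) = (m - 1 - 2 * i : K) • x i)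
    (hh' : ∀ j < n, h' (y j) = (n - 1 - 2 * j : K) • y j) (hm : d < m) (hn : d < n) :
    tensorSum h h' (highestWeightVector K x y d) =
      ((m + n - 2 - 2 * d : ℕ) : K) • highestWeightVector K x y d := by
  simp only [highestWeightVector, map_sum, map_smul, tensorSum_tmul, Finset.smul_sum]
  refine Finset.sum_congr rfl fun p hp ↦ ?_
  have hp' := mem_antidiagonal.1 hp
  rw [hh _ (by omega), hh' _ (by omega), ← smul_tmul', tmul_smul, ← add_smul, smul_comm]
  congr 1
  rw [← hp', Nat.cast_sub (by omega), Nat.cast_sub (by omega)]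
  push_cast
  ring

theorem linearIndependent_highestWeightVector [CharZero K]
    {h : Module.End K U} {h' : Module.End K V}
    (hh : ∀ i < m, h (x i) = (m - 1 - 2 * i : K) • x i)
    (hh' : ∀ j < n, h' (y j) = (n - 1 - 2 * j : K) • y j)
    (hx : LinearIndependent K fun i : Fin m ↦ x i) (hy : LinearIndependent K fun j : Fin n ↦ y j) :
    LinearIndependent K fun d : Fin (min m n) ↦ highestWeightVector K x y d := by
  refine Module.End.eigenvectors_linearIndependent' (tensorSum h h')
    (fun d : Fin (min m n) ↦ ((m + n - 2 - 2 * d : ℕ) : K)) (fun d d' hd ↦ ?_) _ fun d ↦ ?_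
  · have := Nat.cast_injective hd
    omega
  · have hm : (d : ℕ) < m := by omega
    have hn : (d : ℕ) < n := by omega
    exact Module.End.hasEigenvector_iff.2 ⟨Module.End.mem_eigenspace_iff.2
      (tensorSum_highestWeightVector_eq_smul hh hh' hm hn),
      highestWeightVector_ne_zero hx hy hm hn⟩

end HighestWeightVector

end JordanChains

theorem sum_range_min_add_sub_one_sub_two_mul (u v : ℕ) :
    ∑ d ∈ Finset.range (min u v), (u + v - 1 - 2 * d) = u * v := by
  have hpartial : ∀ n ≤ min u v, ∑ d ∈ Finset.range n, (u + v - 1 - 2 * d) = n * (u + v - n) := by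
    intro n hn
    induction n with
    | zero => simp
    | succ n ih =>
      rw [Finset.sum_range_succ, ih (by omega)]
      zify [show n ≤ u + v by omega, show 1 ≤ u + v by omega, show 2 * n ≤ u + v - 1 by omega,
        show n + 1 ≤ u + v by omega]
      ring
  rw [hpartial _ le_rfl, ← min_add_max u v, Nat.add_sub_cancel_left, min_mul_max]

theorem sum_range_comp_add_sub_one_sub_two_mul {M : Type*} [AddCommMonoid M] (g : ℕ → M)
    {u v : ℕ} (huv : v ≤ u) :
    ∑ d ∈ Finset.range v, g (u + v - 1 - 2 * d) = ∑ j ∈ Finset.Icc 1 v, g (u - v + 2 * j - 1) := by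
  refine Finset.sum_nbij' (v - ·) (v - ·) ?_ ?_ ?_ ?_ fun d hd ↦ congrArg g ?_ <;>
    grind

theorem jordan_type_of_tensor_sum_general {K U V : Type*} [Field K] [CharZero K] [AddCommGroup U]
    [Module K U] [AddCommGroup V] [Module K V] {X : Module.End K U} {Y : Module.End K V}
    (hX : IsRegularNilpotent X) (hY : IsRegularNilpotent Y) :
    IsNilpotent (tensorSum X Y) ∧
      ∀ p : ℕ, finrank K (ker (tensorSum X Y ^ p)) =
        ∑ d ∈ Finset.range (min (finrank K U) (finrank K V)),
          min p (finrank K U + finrank K V - 1 - 2 * d) := by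
  have := hX.finiteDimensional
  have := hY.finiteDimensional
  obtain ⟨x, hx⟩ := hX.exists_isJordanChain
  obtain ⟨y, hy⟩ := hY.exists_isJordanChain
  obtain ⟨h, f, hXf, hh⟩ := hx.exists_isSl2Representation
  obtain ⟨h', f', hYf, hh'⟩ := hy.exists_isSl2Representation
  have hker (d : Fin (min (finrank K U) (finrank K V))) :
      tensorSum X Y (highestWeightVector K x y d) = 0 :=
    tensorSum_highestWeightVector_eq_zero hx hy (by omega) (by omega)
  have hrange (d : Fin (min (finrank K U) (finrank K V))) : highestWeightVector K x y d ∈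
      range (tensorSum X Y ^ (finrank K U + finrank K V - 1 - 2 * d - 1)) := by
    rw [show finrank K U + finrank K V - 1 - 2 * (d : ℕ) - 1 =
      finrank K U + finrank K V - 2 - 2 * d by omega]
    exact (hXf.tensorSum hYf).mem_range_pow
      (tensorSum_highestWeightVector_eq_smul hh hh' (by omega) (by omega)) (hker d)
  refine ⟨isNilpotent_tensorSum ⟨_, hX.1⟩ ⟨_, hY.1⟩, fun p ↦ ?_⟩
  rw [finrank_ker_pow_eq_sum_min (linearIndependent_highestWeightVector hh hh'
    hx.linearIndependent hy.linearIndependent) hker hrange ?_ p,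
    Fin.sum_univ_eq_sum_range fun d ↦ min p (finrank K U + finrank K V - 1 - 2 * d)]
  rw [Fin.sum_univ_eq_sum_range fun d ↦ finrank K U + finrank K V - 1 - 2 * d,
    sum_range_min_add_sub_one_sub_two_mul, finrank_tensorProduct]

end JordanType

open Finset in
/-- Jordan type of a tensor product (Proposition 2.2): if `X` and `Y` are regular nilpotent
endomorphisms of `U` and `V` of dimensions `u ≥ v ≥ 1`, then
`Z = X ⊗ id + id ⊗ Y` is nilpotent with exactly `v` Jordan blocks, of sizes
`u−v+1, u−v+3, …, u+v−1`. -/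
theorem jordan_type_of_tensor_sum
    (U V : Type*) [AddCommGroup U] [Module ℂ U] [FiniteDimensional ℂ U]
    [AddCommGroup V] [Module ℂ V] [FiniteDimensional ℂ V]
    (u v : ℕ) (hu : Module.finrank ℂ U = u) (hv : Module.finrank ℂ V = v)
    (huv : v ≤ u) (hv1 : 1 ≤ v)
    (X : Module.End ℂ U) (hX : X ^ u = 0 ∧ X ^ (u - 1) ≠ 0)
    (Y : Module.End ℂ V) (hY : Y ^ v = 0 ∧ Y ^ (v - 1) ≠ 0)
    (Z : Module.End ℂ (TensorProduct ℂ U V))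
    (hZ : Z = TensorProduct.map X LinearMap.id + TensorProduct.map LinearMap.id Y) :
    IsNilpotent Z ∧
      ∀ p : ℕ, Module.finrank ℂ (LinearMap.ker (Z ^ p)) =
        ∑ j ∈ Icc 1 v, min p (u - v + 2 * j - 1) := by
  subst hu hv hZ
  obtain ⟨hnil, hker⟩ := jordan_type_of_tensor_sum_general (X := X) (Y := Y) hX hY
  refine ⟨hnil, fun p ↦ (hker p).trans ?_⟩
  rw [min_eq_right huv, sum_range_comp_add_sub_one_sub_two_mul (min p) huv]
end

section
/- Let U be a complex vector space of dimension u ≥ 2 and let X be a regular nilpotent endomorphism of U. Let ∧²X denote the derivation extension of X to the exterior square ⋀²U, i.e. the unique linear endomorphism with (∧²X)(x ∧ y) = Xx ∧ y + x ∧ Xy. Then ∧²X is nilpotent, and: if u = 2v is even, ∧²X has exactly v Jordan blocks, of sizes 1, 5, …, 2u−3 (i.e. dim ker((∧²X)^p) = Σ_{j=1}^{v} min(p, 4j−3) for all p ≥ 0); if u = 2v+1 is odd, ∧²X has exactly v Jordan blocks, of sizes 3, 7, …, 2u−3 (i.e. dim ker((∧²X)^p) = Σ_{j=1}^{v} min(p,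 4j−1) for all p ≥ 0). -/
/-!
Put `n = u - 1` and let `e 0, …, e n` be a basis of `U` with `X (e (a + 1)) = e a` and
`X (e 0) = 0`. Then `X` is the raising operator of an `sl₂`-triple on `U` in which `e a` has
weight `n - 2 * a`, and `⋀²U` becomes an `sl₂`-module on which the raising operator acts as the
derivation extension of `X`. For odd `k ≤ n` the vector `∑ (-1) ^ a • e a ∧ e (k - a)` is nonzero
of weight `2 * n - 2 * k`, and the raising operator kills it because the image telescopes; it
is therefore primitive and generates a Jordan block of size `2 * n - 2 * k + 1`. For
`k = 1, 3, 5, …` these sizes add up to `u.choose 2 = dim ⋀²U`, so there are no further blocks.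
-/

open Finset Module

section KernelFiltration

/-- A family of vectors adapted to the filtration `ker D ⊆ ker (D ^ 2) ⊆ ⋯`: a vector `y q` of
level `n` lies in `ker (D ^ (n + 1))`, and `D ^ n`, which maps the `n`-th graded piece injectively
into `ker D`, sends the vectors of level `n` to linearly independent ones. When the family spans,
counting levels computes `dim ker (D ^ p)`. -/
structure IsKerAdapted {R V κ : Type*} [Ring R] [AddCommGroup V] [Module R V]
    (D : V →ₗ[R] V) (level : κ → ℕ) (y : κ → V) : Prop where
  pow_level_succ_apply : ∀ q, (D ^ (level q + 1)) (y q) = 0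
  linearIndepOn_pow_apply : ∀ n, LinearIndepOn R (fun q => (D ^ n) (y q)) {q | level q = n}

namespace IsKerAdapted

section Ring

variable {R V κ : Type*} [Ring R] [AddCommGroup V] [Module R V]
  {D : End R V} {level : κ → ℕ} {y : κ → V}

theorem pow_apply_eq_zero (h : IsKerAdapted D level y) {n : ℕ} {q : κ} (hq : level q < n) :
    (D ^ n) (y q) = 0 :=
  Module.End.pow_map_zero_of_le hq (h.pow_level_succ_apply q)

theorem linearIndependent (h : IsKerAdapted D level y) : LinearIndependent R y := by
  classical
  refine linearIndependent_iff'.2 fun s c hc => ?_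
  by_contra! hne
  obtain ⟨q₀, hq₀, hmax⟩ := (s.filter (c · ≠ 0)).exists_max_image level <| by
    simpa [Finset.Nonempty] using hne
  rw [mem_filter] at hq₀
  have hsum : ∑ q ∈ s with level q = level q₀, c q • (D ^ level q₀) (y q) = 0 := by
    rw [sum_filter_of_ne, ← map_zero (D ^ level q₀), ← hc, map_sum]
    · simp only [map_smul]
    · intro q hq hqne
      have hcq : c q ≠ 0 := left_ne_zero_of_smul hqne
      refine (hmax q (mem_filter.2 ⟨hq, hcq⟩)).antisymm (not_lt.1 fun hlt => hqne ?_)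
      rw [h.pow_apply_eq_zero hlt, smul_zero]
  exact hq₀.2 <| linearIndepOn_iff'.1 (h.linearIndepOn_pow_apply (level q₀)) _ c
    (by simp) hsum q₀ (mem_filter.2 ⟨hq₀.1, rfl⟩)

theorem pow_apply (h : IsKerAdapted D level y) (p : ℕ) :
    IsKerAdapted D (fun q : {q // p ≤ level q} => level q - p) (fun q => (D ^ p) (y q)) where
  pow_level_succ_apply q := by
    rw [← Module.End.mul_apply, ← pow_add, h.pow_apply_eq_zero]
    have := q.2
    omega
  linearIndepOn_pow_apply n := by
    have himage : Subtype.val '' {q : {q // p ≤ level q} | level q - p = n} ⊆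
        {q | level q = n + p} := by
      rintro _ ⟨q, hq, rfl⟩
      have := q.2
      simp only [Set.mem_ofPred_eq] at hq ⊢
      omega
    simpa only [Function.comp_def, pow_add, Module.End.mul_apply] using
      ((h.linearIndepOn_pow_apply (n + p)).mono himage).comp_of_image Subtype.val_injective.injOn

end Ring

variable {K V κ : Type*} [Field K] [AddCommGroup V] [Module K V] [FiniteDimensional K V]
  [Fintype κ] {D : End K V} {level : κ → ℕ} {y : κ → V}

theorem finrank_ker_pow (h : IsKerAdapted D level y) (hcard : finrank K V = Fintype.card κ)
    (p : ℕ) : finrank K (LinearMap.ker (D ^ p)) = Fintype.card {q // level q < p} := by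
  have hker : Fintype.card {q // level q < p} ≤ finrank K (LinearMap.ker (D ^ p)) := by
    have hli : LinearIndependent K (fun q : {q // level q < p} =>
        (⟨y q, h.pow_apply_eq_zero q.2⟩ : LinearMap.ker (D ^ p))) :=
      .of_comp (LinearMap.ker (D ^ p)).subtype (h.linearIndependent.comp _ Subtype.val_injective)
    exact hli.fintype_card_le_finrank
  have hrange : Fintype.card {q // p ≤ level q} ≤ finrank K (LinearMap.range (D ^ p)) := by
    have hli : LinearIndependent K (fun q : {q // p ≤ level q} =>
        (⟨(D ^ p) (y q), LinearMap.mem_range_self _ _⟩ : LinearMap.range (D ^ p))) :=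
      .of_comp (LinearMap.range (D ^ p)).subtype (h.pow_apply p).linearIndependent
    exact hli.fintype_card_le_finrank
  have hrank := LinearMap.finrank_range_add_finrank_ker (D ^ p)
  have hsplit := Fintype.card_subtype_compl (fun q => level q < p)
  simp only [not_lt] at hsplit
  have := Fintype.card_subtype_le (fun q => level q < p)
  omega

theorem isNilpotent (h : IsKerAdapted D level y) (hcard : finrank K V = Fintype.card κ) :
    IsNilpotent D := by
  refine ⟨univ.sup level + 1, LinearMap.ker_eq_top.1 (Submodule.eq_top_of_finrank_eq ?_)⟩
  rw [h.finrank_ker_pow hcard, hcard, Fintype.card_congr (Equiv.subtypeUnivEquiv fun q => ?_)]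
  exact Nat.lt_succ_of_le (le_sup (mem_univ q))

end IsKerAdapted

end KernelFiltration

theorem card_sigma_fin_lt {ι : Type*} [Fintype ι] (s : ι → ℕ) (p : ℕ) :
    Fintype.card {q : Σ i, Fin (s i) // (q.2 : ℕ) < p} = ∑ i, min p (s i) := by
  rw [Fintype.card_subtype, card_filter, Fintype.sum_sigma]
  refine sum_congr rfl fun i _ => ?_
  rw [← card_filter, Fin.card_filter_val_lt, min_comm]

section Sl2

open LieModule

variable {R L M : Type*} [CommRing R] [LieRing L] [LieAlgebra R L]
  [AddCommGroup M] [Module R M] [LieRingModule L M] [LieModule R L M]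
  {h e f : L} {t : IsSl2Triple h e f}

theorem toEnd_pow_toEnd_pow_primitiveVector {m : M} {μ : R}
    (hm : t.HasPrimitiveVectorWith m μ) (n : ℕ) :
    (toEnd R L M e ^ n) ((toEnd R L M f ^ n) m) = (∏ j ∈ range n, ((j + 1) * (μ - j))) • m := by
  induction n with
  | zero => simp
  | succ n ih =>
    rw [pow_succ (toEnd R L M e), Module.End.mul_apply, toEnd_apply_apply,
      hm.lie_e_pow_succ_toEnd_f, map_smul, ih, smul_smul, prod_range_succ, mul_comm]

section CharZero

variable {K M ι : Type*} [Field K] [CharZero K] [LieAlgebra K L] [AddCommGroup M] [Module K M]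
  [LieRingModule L M] [LieModule K L M] {z : ι → M} {μ : ι → ℕ}

theorem isKerAdapted_toEnd_pow_primitiveVectors
    (hz : ∀ i, t.HasPrimitiveVectorWith (z i) (μ i : K)) (hli : LinearIndependent K z) :
    IsKerAdapted (toEnd K L M e) (fun q : Σ i, Fin (μ i + 1) => (q.2 : ℕ))
      (fun q => (toEnd K L M f ^ (q.2 : ℕ)) (z q.1)) where
  pow_level_succ_apply q := by
    rw [pow_succ', Module.End.mul_apply, toEnd_pow_toEnd_pow_primitiveVector (hz q.1), map_smul,
      toEnd_apply_apply, (hz q.1).lie_e, smul_zero]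
  linearIndepOn_pow_apply n := by
    let S : Set (Σ i, Fin (μ i + 1)) := {q | (q.2 : ℕ) = n}
    have hfst : Function.Injective fun q : S => q.1.1 := by
      rintro ⟨⟨i, k⟩, hk⟩ ⟨⟨j, l⟩, hl⟩ rfl
      simp only [S, Set.mem_ofPred_eq] at hk hl
      simp only [Subtype.mk.injEq, Sigma.mk.injEq, heq_eq_eq, true_and]
      exact Fin.ext (hk.trans hl.symm)
    have hscalar (q : S) : ∏ j ∈ range n, ((j + 1 : K) * (μ q.1.1 - j)) ≠ 0 := by
      refine prod_ne_zero_iff.2 fun j hj => mul_ne_zero (Nat.cast_add_one_ne_zero j) ?_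
      have hlt : j < μ q.1.1 := by
        have := q.1.2.2
        have : (q.1.2 : ℕ) = n := q.2
        have := mem_range.1 hj
        omega
      exact sub_ne_zero.2 (Nat.cast_injective.ne hlt.ne')
    have hlowered : (fun q : S => (toEnd K L M e ^ n) ((toEnd K L M f ^ (q.1.2 : ℕ)) (z q.1.1))) =
        fun q : S => Units.mk0 _ (hscalar q) • z q.1.1 := by
      funext q
      have hq : (q.1.2 : ℕ) = n := q.2
      rw [hq, toEnd_pow_toEnd_pow_primitiveVector (hz q.1.1), Units.smul_mk0]
    rw [LinearIndepOn]
    exact hlowered ▸ (hli.comp _ hfst).units_smul _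

theorem linearIndependent_of_primitiveVectors (hμ : Function.Injective μ)
    (hz : ∀ i, t.HasPrimitiveVectorWith (z i) (μ i : K)) : LinearIndependent K z :=
  Module.End.eigenvectors_linearIndependent' (toEnd K L M h) (fun i => (μ i : K))
    (Nat.cast_injective.comp hμ) z fun i =>
      ⟨Module.End.mem_eigenspace_iff.2 (hz i).lie_h, (hz i).ne_zero⟩

theorem isNilpotent_toEnd_of_primitiveVectors [Fintype ι] [FiniteDimensional K M]
    (hz : ∀ i, t.HasPrimitiveVectorWith (z i) (μ i : K)) (hli : LinearIndependent K z)
    (hdim : finrank K M = ∑ i, (μ i + 1)) : IsNilpotent (toEnd K L M e) :=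
  (isKerAdapted_toEnd_pow_primitiveVectors hz hli).isNilpotent (by simpa using hdim)

theorem finrank_ker_toEnd_pow_of_primitiveVectors [Fintype ι] [FiniteDimensional K M]
    (hz : ∀ i, t.HasPrimitiveVectorWith (z i) (μ i : K)) (hli : LinearIndependent K z)
    (hdim : finrank K M = ∑ i, (μ i + 1)) (p : ℕ) :
    finrank K (LinearMap.ker (toEnd K L M e ^ p)) = ∑ i, min p (μ i + 1) := by
  rw [(isKerAdapted_toEnd_pow_primitiveVectors hz hli).finrank_ker_pow (by simpa using hdim),
    card_sigma_fin_lt]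

end CharZero

end Sl2

section ExteriorSquare

variable {R M : Type*} [CommRing R] [AddCommGroup M] [Module R M]

variable (R) in
/-- The wedge product `x ∧ y` of two vectors, as a bilinear map into the exterior square. -/
noncomputable def wedge : M →ₗ[R] M →ₗ[R] ⋀[R]^2 M :=
  LinearMap.mk₂ R (fun x y => exteriorPower.ιMulti R 2 ![x, y])
    (fun x x' y => Subtype.ext <| by simp [ExteriorAlgebra.ιMulti_apply, add_mul])
    (fun c x y => Subtype.ext <| by simp [ExteriorAlgebra.ιMulti_apply])
    (fun x y y' => Subtype.ext <| by simp [ExteriorAlgebra.ιMulti_apply, mul_add])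
    (fun c x y => Subtype.ext <| by simp [ExteriorAlgebra.ιMulti_apply])

theorem wedge_self (x : M) : wedge R x x = 0 :=
  (exteriorPower.ιMulti R 2).map_eq_zero_of_eq ![x, x] (i := 0) (j := 1) rfl (by decide)

theorem wedge_swap (x y : M) : wedge R y x = -wedge R x y :=
  eq_neg_of_add_eq_zero_right (by simpa [wedge_self] using wedge_self (R := R) (x + y))

theorem exteriorSquare_hom_ext {N : Type*} [AddCommGroup N] [Module R N]
    {F G : ⋀[R]^2 M →ₗ[R] N} (h : ∀ x y, F (wedge R x y) = G (wedge R x y)) : F = G := by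
  refine exteriorPower.linearMap_ext (AlternatingMap.ext fun v => ?_)
  have hv : v = ![v 0, v 1] := List.ofFn_inj.1 rfl
  rw [hv]
  exact h _ _

/-- The derivation extension of `f` to the exterior square, sending `x ∧ y` to
`f x ∧ y + x ∧ f y`. -/
noncomputable def derivationExtension (f : End R M) : End R (⋀[R]^2 M) :=
  exteriorPower.alternatingMapLinearEquiv
    { toFun v := wedge R (f (v 0)) (v 1) + wedge R (v 0) (f (v 1))
      map_update_add' v i x y := by
        fin_cases i <;> simp <;> abel
      map_update_smul' v i c x := by
        fin_cases i <;> simp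
      map_eq_zero_of_eq' v i j hv hij := by
        have hv : v 0 = v 1 := by fin_cases i <;> fin_cases j <;> simp_all
        rw [hv, wedge_swap, neg_add_cancel] }

theorem derivationExtension_wedge (f : End R M) (x y : M) :
    derivationExtension f (wedge R x y) = wedge R (f x) y + wedge R x (f y) :=
  exteriorPower.alternatingMapLinearEquiv_apply_ιMulti _ _

attribute [local instance] LieRing.ofAssociativeRing

variable (R M) in
/-- The derivation extension as a representation of `𝔤𝔩(M)` on the exterior square of `M`. -/
noncomputable def derivationExtensionHom : End R M →ₗ⁅R⁆ End R (⋀[R]^2 M) where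
  toFun := derivationExtension
  map_add' f g := exteriorSquare_hom_ext fun x y => by
    simp only [derivationExtension_wedge, LinearMap.add_apply, map_add]
    abel
  map_smul' c f := exteriorSquare_hom_ext fun x y => by
    simp [derivationExtension_wedge]
  map_lie' {f g} := exteriorSquare_hom_ext fun x y => by
    simp only [derivationExtension_wedge, LieRing.of_associative_ring_bracket,
      LinearMap.sub_apply, map_sub, Module.End.mul_apply, map_add]
    abel

noncomputable instance exteriorSquareLieRingModule : LieRingModule (End R M) (⋀[R]^2 M) :=
  LieRingModule.compLieHom _ (derivationExtensionHom R M)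

instance exteriorSquareLieModule : LieModule R (End R M) (⋀[R]^2 M) :=
  LieModule.compLieHom _ (derivationExtensionHom R M)

end ExteriorSquare

section AlternatingSum

variable {R M N : Type*} [CommRing R] [AddCommGroup M] [Module R M] [AddCommGroup N] [Module R N]

/-- The sum `∑ (-1) ^ a • B (e a) (e b)` over all `a + b = t`. For `B` the wedge product it
produces the primitive vectors of the exterior square. -/
def alternatingSum (B : M →ₗ[R] M →ₗ[R] N) (e : ℕ → M) (t : ℕ) : N :=
  ∑ p ∈ antidiagonal t, (-1 : R) ^ p.1 • B (e p.1) (e p.2)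

variable {B : M →ₗ[R] M →ₗ[R] N} {e : ℕ → M} {t : ℕ}

theorem apply_alternatingSum_eq_zero {X : End R M} {D : End R N}
    (hD : ∀ x y, D (B x y) = B (X x) y + B x (X y))
    (hzero : X (e 0) = 0) (hsucc : ∀ a < t, X (e (a + 1)) = e a) :
    D (alternatingSum B e t) = 0 := by
  cases t with
  | zero => simp [alternatingSum, hD, hzero]
  | succ t =>
    have hleft : ∑ p ∈ antidiagonal (t + 1), (-1 : R) ^ p.1 • B (X (e p.1)) (e p.2) =
        -alternatingSum B e t := by
      rw [Nat.sum_antidiagonal_succ, alternatingSum, ← sum_neg_distrib, hzero, map_zero,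
        LinearMap.zero_apply, smul_zero, zero_add]
      refine sum_congr rfl fun p hp => ?_
      rw [hsucc _ (Nat.antidiagonal.fst_lt hp), pow_succ, mul_neg_one, neg_smul]
    have hright : ∑ p ∈ antidiagonal (t + 1), (-1 : R) ^ p.1 • B (e p.1) (X (e p.2)) =
        alternatingSum B e t := by
      rw [Nat.sum_antidiagonal_succ', alternatingSum, hzero, map_zero, smul_zero, zero_add]
      refine sum_congr rfl fun p hp => ?_
      rw [hsucc _ (Nat.antidiagonal.snd_lt hp)]
    rw [alternatingSum]
    simp only [map_sum, map_smul, hD, smul_add, sum_add_distrib]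
    rw [hleft, hright, neg_add_cancel]

theorem apply_alternatingSum_eq_smul {H : End R M} {D : End R N}
    (hD : ∀ x y, D (B x y) = B (H x) y + B x (H y)) {w : ℕ → R} {ρ : R}
    (hH : ∀ a ≤ t, H (e a) = w a • e a) (hw : ∀ p ∈ antidiagonal t, w p.1 + w p.2 = ρ) :
    D (alternatingSum B e t) = ρ • alternatingSum B e t := by
  rw [alternatingSum, map_sum, smul_sum]
  refine sum_congr rfl fun p hp => ?_
  rw [map_smul, hD, hH _ (HasAntidiagonal.antidiagonal.fst_le hp),
    hH _ (HasAntidiagonal.antidiagonal.snd_le hp), ← hw p hp,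
    map_smul, map_smul, LinearMap.smul_apply, ← add_smul, smul_comm]

theorem alternatingSum_wedge_ne_zero [NeZero (2 : R)] (ht : Odd t) {φ ψ : Dual R M}
    (hφ : ∀ a ≤ t, φ (e a) = if a = 0 then 1 else 0)
    (hψ : ∀ a ≤ t, ψ (e a) = if a = t then 1 else 0) : alternatingSum (wedge R) e t ≠ 0 := by
  intro h
  let Φ := exteriorPower.pairingDual R M 2 (exteriorPower.ιMulti R 2 ![φ, ψ])
  have hΦ (x y : M) : Φ (wedge R x y) = φ x * ψ y - φ y * ψ x := by
    simp [Φ, wedge, exteriorPower.pairingDual_ιMulti_ιMulti, Matrix.det_fin_two, mul_comm]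
  have ht0 : t ≠ 0 := ht.pos.ne'
  have hval : Φ (alternatingSum (wedge R) e t) = 2 := by
    rw [alternatingSum, map_sum, sum_eq_add (0, t) (t, 0) (by simp [ht0.symm])]
    · simp [hΦ, hφ, hψ, ht0, ht0.symm, ht.neg_one_pow, one_add_one_eq_two]
    · rintro ⟨a, b⟩ hp hne
      have hab : a + b = t := mem_antidiagonal.1 hp
      simp only [ne_eq, Prod.mk.injEq] at hne
      have ha : ¬ (a = 0 ∨ b = 0) := by grind
      simp [hΦ, hφ a (by grind), hφ b (by grind), not_or.1 ha]
    · simp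
    · simp
  exact two_ne_zero (hval.symm.trans (by rw [h, map_zero]))

end AlternatingSum

section JordanString

variable {K V : Type*} [Field K] [AddCommGroup V] [Module K V] {X : End K V} {n : ℕ} {e : ℕ → V}

/-- A basis `e 0, …, e n` of `V` consisting of one Jordan string `e n ↦ ⋯ ↦ e 0 ↦ 0` of `X`. The
string is indexed by `ℕ` so that indices can be added; its values beyond `n` are irrelevant. -/
structure IsJordanString (X : End K V) (n : ℕ) (e : ℕ → V) : Prop where
  apply_zero : X (e 0) = 0
  apply_succ : ∀ a < n, X (e (a + 1)) = e a
  linearIndependent : LinearIndependent K fun a : Fin (n + 1) => e a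
  top_le_span : ⊤ ≤ Submodule.span K (Set.range fun a : Fin (n + 1) => e a)

namespace IsJordanString

theorem exists_of_pow_ne_zero (hdim : finrank K V = n + 1) (hX : X ^ (n + 1) = 0)
    (hX' : X ^ n ≠ 0) : ∃ e, IsJordanString X n e := by
  obtain ⟨v, hv⟩ := DFunLike.ne_iff.1 hX'
  have hli : LinearIndependent K fun a : Fin (n + 1) => (X ^ (n - a)) v := by
    refine IsKerAdapted.linearIndependent (D := X) (level := Fin.val)
      ⟨fun a => ?_, fun k => ?_⟩
    · rw [← Module.End.mul_apply, ← pow_add, show (a : ℕ) + 1 + (n - a) = n + 1 by omega, hX,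
        LinearMap.zero_apply]
    · obtain hk | hk := lt_or_ge k (n + 1)
      · have hlevel : {a : Fin (n + 1) | (a : ℕ) = k} = {⟨k, hk⟩} := by
          ext a
          simp [Fin.ext_iff]
        rw [hlevel, linearIndepOn_singleton_iff, ← Module.End.mul_apply, ← pow_add,
          Nat.add_sub_cancel' (Nat.le_of_lt_succ hk)]
        exact hv
      · have hlevel : {a : Fin (n + 1) | (a : ℕ) = k} = ∅ := by
          ext a
          simpa only [Set.mem_ofPred_eq, Set.mem_empty_iff_false, iff_false] using
            (a.2.trans_le hk).ne
        exact hlevel ▸ linearIndepOn_empty K _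
  refine ⟨fun a => (X ^ (n - a)) v, ?_, fun a ha => ?_, hli, ?_⟩
  · rw [← Module.End.mul_apply, ← pow_succ', Nat.sub_zero, hX, LinearMap.zero_apply]
  · rw [← Module.End.mul_apply, ← pow_succ']
    congr 2
    omega
  · exact (hli.span_eq_top_of_card_eq_finrank (by simp [hdim])).ge

/-- The vectors `e 0, …, e n` of a Jordan string as a basis. -/
noncomputable def basis (h : IsJordanString X n e) : Basis (Fin (n + 1)) K V :=
  Basis.mk h.linearIndependent h.top_le_span

theorem basis_apply (h : IsJordanString X n e) (a : Fin (n + 1)) : h.basis a = e a :=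
  Basis.mk_apply _ _ a

theorem basis_coord_apply (h : IsJordanString X n e) (a : Fin (n + 1)) {b : ℕ} (hb : b ≤ n) :
    h.basis.coord a (e b) = if b = a then 1 else 0 := by
  simp [← h.basis_apply ⟨b, Nat.lt_succ_of_le hb⟩, Finsupp.single_apply, Fin.ext_iff]

theorem hom_ext (h : IsJordanString X n e) {f g : End K V} (hfg : ∀ a ≤ n, f (e a) = g (e a)) :
    f = g :=
  h.basis.ext fun a => by simpa only [h.basis_apply] using hfg a (Nat.le_of_lt_succ a.2)

theorem exists_apply_eq (h : IsJordanString X n e) (y : ℕ → V) :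
    ∃ f : End K V, ∀ a ≤ n, f (e a) = y a := by
  refine ⟨h.basis.constr K fun a => y a, fun a ha => ?_⟩
  rw [← h.basis_apply ⟨a, Nat.lt_succ_of_le ha⟩, Basis.constr_basis]

theorem ne_zero (h : IsJordanString X n e) {a : ℕ} (ha : a ≤ n) : e a ≠ 0 :=
  h.linearIndependent.ne_zero (⟨a, Nat.lt_succ_of_le ha⟩ : Fin (n + 1))

section Sl2

attribute [local instance] LieRing.ofAssociativeRing

variable {H Y : End K V}

theorem lie_eq_weightOperator (h : IsJordanString X n e)
    (hH : ∀ a ≤ n, H (e a) = (n - 2 * a : K) • e a)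
    (hY : ∀ a ≤ n, Y (e a) = ((a + 1) * (n - a) : K) • e (a + 1)) : ⁅X, Y⁆ = H := by
  refine h.hom_ext fun a ha => ?_
  have hXY : X (Y (e a)) = ((a + 1) * (n - a) : K) • e a := by
    rw [hY a ha, map_smul]
    obtain rfl | ha := ha.eq_or_lt
    · simp
    · rw [h.apply_succ a ha]
  rw [LieRing.of_associative_ring_bracket, LinearMap.sub_apply, Module.End.mul_apply,
    Module.End.mul_apply, hXY, hH a ha]
  cases a with
  | zero => simp [h.apply_zero]
  | succ a =>
    rw [h.apply_succ a ha, hY a (Nat.le_of_succ_le ha), ← sub_smul]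
    congr 1
    push_cast
    ring

theorem weightOperator_lie_raising (h : IsJordanString X n e)
    (hH : ∀ a ≤ n, H (e a) = (n - 2 * a : K) • e a) : ⁅H, X⁆ = 2 • X := by
  refine h.hom_ext fun a ha => ?_
  rw [LieRing.of_associative_ring_bracket, LinearMap.sub_apply, Module.End.mul_apply,
    Module.End.mul_apply, hH a ha, map_smul, LinearMap.smul_apply]
  cases a with
  | zero => simp [h.apply_zero]
  | succ a =>
    rw [h.apply_succ a ha, hH a (Nat.le_of_succ_le ha), ← sub_smul, ← Nat.cast_smul_eq_nsmul K]
    congr 1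
    push_cast
    ring

theorem weightOperator_lie_lowering (h : IsJordanString X n e)
    (hH : ∀ a ≤ n, H (e a) = (n - 2 * a : K) • e a)
    (hY : ∀ a ≤ n, Y (e a) = ((a + 1) * (n - a) : K) • e (a + 1)) : ⁅H, Y⁆ = -(2 • Y) := by
  refine h.hom_ext fun a ha => ?_
  have hHY : H (Y (e a)) = (n - 2 * (a + 1) : K) • Y (e a) := by
    rw [hY a ha, map_smul]
    obtain rfl | ha := ha.eq_or_lt
    · simp
    · rw [hH _ ha, smul_comm, Nat.cast_succ]
  rw [LieRing.of_associative_ring_bracket, LinearMap.sub_apply, Module.End.mul_apply,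
    Module.End.mul_apply, hHY, hH a ha, map_smul, ← sub_smul, LinearMap.neg_apply,
    LinearMap.smul_apply, ← Nat.cast_smul_eq_nsmul K, ← neg_smul]
  congr 1
  push_cast
  ring

theorem exists_isSl2Triple [CharZero K] (h : IsJordanString X n e) (hn : n ≠ 0) :
    ∃ H Y : End K V, IsSl2Triple H X Y ∧ ∀ a ≤ n, H (e a) = (n - 2 * a : K) • e a := by
  obtain ⟨H, hH⟩ := h.exists_apply_eq fun a => (n - 2 * a : K) • e a
  obtain ⟨Y, hY⟩ := h.exists_apply_eq fun a => ((a + 1) * (n - a) : K) • e (a + 1)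
  refine ⟨H, Y, ⟨?_, h.lie_eq_weightOperator hH hY, h.weightOperator_lie_raising hH,
    h.weightOperator_lie_lowering hH hY⟩, hH⟩
  rintro rfl
  simpa [h.ne_zero n.zero_le, hn] using (hH 0 n.zero_le).symm

end Sl2

end IsJordanString

end JordanString

theorem choose_two_eq_sum_range (n : ℕ) :
    (n + 1).choose 2 = ∑ i ∈ range ((n + 1) / 2), (2 * n - 2 - 4 * i + 1) := by
  induction n using Nat.twoStepInduction with
  | zero => simp
  | one => simp
  | more n ih _ =>
    have hshift (i : ℕ) : 2 * (n + 2) - 2 - 4 * (i + 1) + 1 = 2 * n - 2 - 4 * i + 1 := by omega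
    rw [show (n + 2 + 1) / 2 = (n + 1) / 2 + 1 by omega, sum_range_succ']
    simp only [hshift]
    rw [← ih, Nat.choose_succ_succ' (n + 2) 1, Nat.choose_succ_succ' (n + 1) 1]
    simp only [Nat.choose_one_right, Nat.reduceAdd]
    omega

section JordanStringExteriorSquare

namespace IsJordanString

attribute [local instance] LieRing.ofAssociativeRing

variable {K V : Type*} [Field K] [AddCommGroup V] [Module K V] {X : End K V} {n : ℕ}
  {e : ℕ → V}

theorem finrank_exteriorSquare (h : IsJordanString X n e) :
    finrank K (⋀[K]^2 V) = ∑ i : Fin ((n + 1) / 2), (2 * n - 2 - 4 * (i : ℕ) + 1) := by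
  have := Module.Finite.of_basis h.basis
  rw [exteriorPower.finrank_eq, finrank_eq_card_basis h.basis, Fintype.card_fin,
    choose_two_eq_sum_range, Fin.sum_univ_eq_sum_range fun i => 2 * n - 2 - 4 * i + 1]

variable [CharZero K]

theorem hasPrimitiveVectorWith_alternatingSum_wedge (h : IsJordanString X n e) {H Y : End K V}
    (t : IsSl2Triple H X Y) (hH : ∀ a ≤ n, H (e a) = (n - 2 * a : K) • e a) {k : ℕ}
    (hk : Odd k) (hkn : k ≤ n) :
    t.HasPrimitiveVectorWith (alternatingSum (wedge K) e k) ((2 * n - 2 * k : ℕ) : K) where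
  ne_zero := alternatingSum_wedge_ne_zero hk (φ := h.basis.coord 0)
    (ψ := h.basis.coord ⟨k, Nat.lt_succ_of_le hkn⟩)
    (fun a ha => h.basis_coord_apply 0 (ha.trans hkn))
    (fun a ha => h.basis_coord_apply _ (ha.trans hkn))
  lie_h := apply_alternatingSum_eq_smul (derivationExtension_wedge H) (w := fun a => n - 2 * a)
    (fun a ha => hH a (ha.trans hkn)) fun p hp => by
      rw [← mem_antidiagonal.1 hp] at hkn ⊢
      push_cast [Nat.cast_sub (Nat.mul_le_mul_left 2 hkn)]
      ring
  lie_e := apply_alternatingSum_eq_zero (derivationExtension_wedge X) h.apply_zero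
    fun a ha => h.apply_succ a (ha.trans_le hkn)

theorem exists_primitiveVectors (h : IsJordanString X n e) (hn : n ≠ 0) :
    ∃ (H Y : End K V) (t : IsSl2Triple H X Y) (z : Fin ((n + 1) / 2) → ⋀[K]^2 V),
      (∀ i, t.HasPrimitiveVectorWith (z i) ((2 * n - 2 - 4 * (i : ℕ) : ℕ) : K)) ∧
        LinearIndependent K z := by
  obtain ⟨H, Y, t, hH⟩ := h.exists_isSl2Triple hn
  suffices hz : ∀ i : Fin ((n + 1) / 2), t.HasPrimitiveVectorWith
      (alternatingSum (wedge K) e (2 * i + 1)) ((2 * n - 2 - 4 * (i : ℕ) : ℕ) : K) from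
    ⟨H, Y, t, _, hz, linearIndependent_of_primitiveVectors (fun i j hij => by grind) hz⟩
  intro i
  rw [show 2 * n - 2 - 4 * (i : ℕ) = 2 * n - 2 * (2 * i + 1) by omega]
  exact h.hasPrimitiveVectorWith_alternatingSum_wedge t hH (odd_two_mul_add_one _) (by omega)

theorem isNilpotent_derivationExtension (h : IsJordanString X n e) (hn : n ≠ 0) :
    IsNilpotent (derivationExtension X) := by
  have := Module.Finite.of_basis h.basis
  obtain ⟨H, Y, t, z, hz, hli⟩ := h.exists_primitiveVectors hn
  exact isNilpotent_toEnd_of_primitiveVectors hz hli h.finrank_exteriorSquare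

theorem finrank_ker_derivationExtension_pow (h : IsJordanString X n e) (hn : n ≠ 0) (p : ℕ) :
    finrank K (LinearMap.ker (derivationExtension X ^ p)) =
      ∑ i ∈ range ((n + 1) / 2), min p (2 * n - 2 - 4 * i + 1) := by
  have := Module.Finite.of_basis h.basis
  obtain ⟨H, Y, t, z, hz, hli⟩ := h.exists_primitiveVectors hn
  rw [← Fin.sum_univ_eq_sum_range fun i => min p (2 * n - 2 - 4 * i + 1)]
  exact finrank_ker_toEnd_pow_of_primitiveVectors hz hli h.finrank_exteriorSquare p

end IsJordanString

end JordanStringExteriorSquare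

theorem sum_range_eq_sum_Icc_of_reflect {A : Type*} [AddCommMonoid A] {v : ℕ} {f g : ℕ → A}
    (hfg : ∀ i < v, f i = g (v - i)) : ∑ i ∈ range v, f i = ∑ j ∈ Icc 1 v, g j := by
  rw [sum_congr rfl fun i hi => hfg i (mem_range.1 hi), range_eq_Ico,
    sum_Ico_reflect g 0 v.le_succ, Nat.add_sub_cancel_left, Nat.sub_zero,
    Ico_add_one_right_eq_Icc]

theorem jordan_type_of_exterior_square_derivation_general {K U : Type*} [Field K] [CharZero K]
    [AddCommGroup U] [Module K U] {u : ℕ} (hu : finrank K U = u) (hu2 : 2 ≤ u)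
    {X : End K U} (hX : X ^ u = 0 ∧ X ^ (u - 1) ≠ 0) {D : End K (⋀[K]^2 U)}
    (hD : ∀ x y, D (wedge K x y) = wedge K (X x) y + wedge K x (X y)) :
    IsNilpotent D ∧
      (∀ v, u = 2 * v → ∀ p, finrank K (LinearMap.ker (D ^ p)) =
        ∑ j ∈ Icc 1 v, min p (4 * j - 3)) ∧
      (∀ v, u = 2 * v + 1 → ∀ p, finrank K (LinearMap.ker (D ^ p)) =
        ∑ j ∈ Icc 1 v, min p (4 * j - 1)) := by
  obtain ⟨n, rfl⟩ : ∃ n, u = n + 1 := ⟨u - 1, by omega⟩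
  have hn : n ≠ 0 := by omega
  obtain ⟨e, he⟩ := IsJordanString.exists_of_pow_ne_zero hu hX.1 hX.2
  obtain rfl : D = derivationExtension X :=
    exteriorSquare_hom_ext fun x y => (hD x y).trans (derivationExtension_wedge X x y).symm
  refine ⟨he.isNilpotent_derivationExtension hn, fun v hv p => ?_, fun v hv p => ?_⟩
  all_goals
    rw [he.finrank_ker_derivationExtension_pow hn, show (n + 1) / 2 = v by omega]
    refine sum_range_eq_sum_Icc_of_reflect fun i hi => ?_
    congr 1
    omega

open Finset in
/-- Jordan type of the derivation extension of a regular nilpotent endomorphism to the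
exterior square (Proposition 2.3): if `X` is regular nilpotent on `U` with `dim U = u ≥ 2`,
and `D` is the unique endomorphism of `⋀²U` with `D(x∧y) = Xx∧y + x∧Xy`, then `D` is
nilpotent; if `u = 2v` it has `v` Jordan blocks of sizes `1, 5, …, 2u−3`, and if
`u = 2v+1` it has `v` Jordan blocks of sizes `3, 7, …, 2u−3`. -/
theorem jordan_type_of_exterior_square_derivation
    (U : Type*) [AddCommGroup U] [Module ℂ U] [FiniteDimensional ℂ U]
    (u : ℕ) (hu : Module.finrank ℂ U = u) (hu2 : 2 ≤ u)
    (X : Module.End ℂ U) (hX : X ^ u = 0 ∧ X ^ (u - 1) ≠ 0)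
    (D : Module.End ℂ (⋀[ℂ]^2 U))
    (hD : ∀ x y : U,
      (D ⟨ExteriorAlgebra.ιMulti ℂ 2 ![x, y],
          ExteriorAlgebra.ιMulti_range ℂ 2 ⟨![x, y], rfl⟩⟩ : ⋀[ℂ]^2 U) =
        (ExteriorAlgebra.ιMulti ℂ 2 ![X x, y] : ExteriorAlgebra ℂ U) +
          ExteriorAlgebra.ιMulti ℂ 2 ![x, X y]) :
    IsNilpotent D ∧
      (∀ v : ℕ, u = 2 * v →
        ∀ p : ℕ, Module.finrank ℂ (LinearMap.ker (D ^ p)) =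
          ∑ j ∈ Icc 1 v, min p (4 * j - 3)) ∧
      (∀ v : ℕ, u = 2 * v + 1 →
        ∀ p : ℕ, Module.finrank ℂ (LinearMap.ker (D ^ p)) =
          ∑ j ∈ Icc 1 v, min p (4 * j - 1)) :=
  jordan_type_of_exterior_square_derivation_general hu hu2 hX fun x y => Subtype.ext (hD x y)
end

section
/- Let t₁, …, t₆ ∈ ℂ be nonzero and pairwise distinct, and suppose that t₁t₂ = t₃t₄ = t₅t₆ and t₁t₃ = t₂t₅ = t₄t₆. Then there exists j ∈ ℂ with j² + j + 1 = 0 such that t₄ = j·t₁, t₅ = j²·t₁, t₂ = j·t₃, and t₆ = j²·t₃. In particular the further triple coincidence t₁t₆ = t₂t₄ = t₃t₅ holds automatically. -/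
/-! Put `a = (t₁, t₄, t₅)` and `b = (t₃, t₂, t₆)`, both indexed by `ℤ/3`. The two triple
coincidences say that `a i * b k` takes a constant value `p` on `i + k = 0` and a constant value
`q` on `i + k = 1`. Since `a i` and `a (i + 1)` are paired with the same `b (-i)` in these
products, `a (i + 1) = (q / p) * a i`, and symmetrically for `b`. So both triples are geometric
progressions of ratio `j = q / p`, which close up after three steps, whence `j ^ 3 = 1`. -/

theorem apply_add_eq_div_mul_of_mul_apply_eq {ι M : Type*} [AddGroup ι] [CommGroupWithZero M]
    {a b : ι → M} {g : ι} {p q : M} (hp : p ≠ 0) (h_neg : ∀ i, a i * b (-i) = p)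
    (h_sub : ∀ i, a i * b (g - i) = q) (i : ι) : a (i + g) = q / p * a i := by
  have h_shift : a (i + g) * b (-i) = q := by simpa [sub_eq_add_neg] using h_sub (i + g)
  rw [div_mul_eq_mul_div, eq_div_iff hp, ← h_neg i, ← h_shift]
  ac_rfl

theorem apply_add_nsmul_of_apply_add_eq_mul {ι M : Type*} [AddMonoid ι] [Monoid M]
    {f : ι → M} {g : ι} {c : M} (hf : ∀ i, f (i + g) = c * f i) (n : ℕ) (i : ι) :
    f (i + n • g) = c ^ n * f i := by
  induction n with
  | zero => simp
  | succ n ih => rw [succ_nsmul, ← add_assoc, hf, ih, pow_succ', mul_assoc]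

theorem pow_eq_one_of_apply_add_eq_mul {ι M : Type*} [AddMonoid ι] [MonoidWithZero M]
    [IsRightCancelMulZero M] {f : ι → M} {g : ι} {c : M} (hf : ∀ i, f (i + g) = c * f i)
    {n : ℕ} (hg : n • g = 0) {i : ι} (hi : f i ≠ 0) : c ^ n = 1 := by
  have h_period : f i = c ^ n * f i := by
    simpa [hg] using apply_add_nsmul_of_apply_add_eq_mul hf n i
  exact (right_eq_mul₀ hi).mp h_period

theorem genus8_regular_triple_collapsings_general {K : Type*} [Field K] (t : Fin 6 → K)
    (ht0 : t 0 ≠ 0) (ht2 : t 2 ≠ 0) (ht30 : t 3 ≠ t 0)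
    (h1 : t 0 * t 1 = t 2 * t 3) (h2 : t 2 * t 3 = t 4 * t 5)
    (h3 : t 0 * t 2 = t 1 * t 4) (h4 : t 1 * t 4 = t 3 * t 5) :
    ∃ j : K, j ^ 2 + j + 1 = 0 ∧
      t 3 = j * t 0 ∧ t 4 = j ^ 2 * t 0 ∧ t 1 = j * t 2 ∧ t 5 = j ^ 2 * t 2 ∧
      (t 0 * t 5 = t 1 * t 3 ∧ t 1 * t 3 = t 2 * t 4) := by
  let a : Fin 3 → K := ![t 0, t 3, t 4]
  let b : Fin 3 → K := ![t 2, t 1, t 5]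
  have h_neg : ∀ i, a i * b (-i) = t 0 * t 2 := Fin.forall_fin_succ.mpr
    ⟨rfl, Fin.forall_fin_two.mpr ⟨(h3.trans h4).symm, (mul_comm _ _).trans h3.symm⟩⟩
  have h_sub : ∀ i, a i * b (1 - i) = t 0 * t 1 := Fin.forall_fin_succ.mpr
    ⟨rfl, Fin.forall_fin_two.mpr ⟨(mul_comm _ _).trans h1.symm, (h1.trans h2).symm⟩⟩
  have hp : t 0 * t 2 ≠ 0 := mul_ne_zero ht0 ht2
  let j : K := t 0 * t 1 / (t 0 * t 2)
  have ha : ∀ i, a (i + 1) = j * a i := apply_add_eq_div_mul_of_mul_apply_eq hp h_neg h_sub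
  have hb : ∀ i, b (i + 1) = j * b i := apply_add_eq_div_mul_of_mul_apply_eq hp
    (fun i ↦ by simpa only [neg_neg, mul_comm] using h_neg (-i))
    (fun i ↦ by simpa only [sub_sub_cancel, mul_comm] using h_sub (1 - i))
  have t3_eq : t 3 = j * t 0 := ha 0
  have t4_eq : t 4 = j ^ 2 * t 0 := apply_add_nsmul_of_apply_add_eq_mul ha 2 0
  have t1_eq : t 1 = j * t 2 := hb 0
  have t5_eq : t 5 = j ^ 2 * t 2 := apply_add_nsmul_of_apply_add_eq_mul hb 2 0
  have j_cubed : j ^ 3 = 1 := pow_eq_one_of_apply_add_eq_mul ha (by decide) (i := 0) ht0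
  have j_ne_one : j ≠ 1 := fun hj ↦ ht30 (by rw [t3_eq, hj, one_mul])
  have j_primitive : IsPrimitiveRoot j 3 :=
    IsPrimitiveRoot.iff_orderOf.mpr (orderOf_eq_prime j_cubed j_ne_one)
  have j_quadratic : j ^ 2 + j + 1 = 0 := by
    rw [← j_primitive.geom_sum_eq_zero (by decide), Finset.sum_range_succ, Finset.sum_range_succ,
      Finset.sum_range_one]
    ring
  refine ⟨j, j_quadratic, t3_eq, t4_eq, t1_eq, t5_eq, ?_, ?_⟩
  · rw [t1_eq, t3_eq, t5_eq]; ring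
  · rw [t1_eq, t3_eq, t4_eq]; ring

/-- Genus 8, regular case (g8.1): if nonzero pairwise distinct `t₁,…,t₆ ∈ ℂ` satisfy the two
triple coincidences `t₁t₂ = t₃t₄ = t₅t₆` and `t₁t₃ = t₂t₅ = t₄t₆`, then for some primitive
cube root of unity `j` one has `t₄ = j t₁`, `t₅ = j² t₁`, `t₂ = j t₃`, `t₆ = j² t₃`; in
particular the third triple coincidence `t₁t₆ = t₂t₄ = t₃t₅` also holds. -/
theorem genus8_regular_triple_collapsings
    (t : Fin 6 → ℂ) (ht0 : ∀ i, t i ≠ 0) (htinj : Function.Injective t)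
    (h1 : t 0 * t 1 = t 2 * t 3) (h2 : t 2 * t 3 = t 4 * t 5)
    (h3 : t 0 * t 2 = t 1 * t 4) (h4 : t 1 * t 4 = t 3 * t 5) :
    ∃ j : ℂ, j ^ 2 + j + 1 = 0 ∧
      t 3 = j * t 0 ∧ t 4 = j ^ 2 * t 0 ∧ t 1 = j * t 2 ∧ t 5 = j ^ 2 * t 2 ∧
      (t 0 * t 5 = t 1 * t 3 ∧ t 1 * t 3 = t 2 * t 4) := by
  exact genus8_regular_triple_collapsings_general t (ht0 0) (ht0 2) (htinj.ne (by decide))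
    h1 h2 h3 h4
end

section
/- Let V = ℂ⁶ with basis e₁, …, e₆, let w = e₁∧e₆ + e₂∧e₅ + e₃∧e₄ ∈ ⋀²V, and let W ⊆ ⋀³V be the kernel of the linear map ⋀³V → ⋀⁵V given by α ↦ w ∧ α. Let X be the endomorphism of V with X e₄ = e₃, X e₅ = e₂, X e₆ = e₁, and X e₁ = X e₂ = X e₃ = 0, and let D_X be the derivation extension of X to ⋀³V. Then W has dimension 14, D_X(W) ⊆ W, and the restriction Z of D_X to W is nilpotent with Jordan type (4, 2, 2, 2, 2, 2), i.e. dim ker(Z^p) = min(p,4) + 5·min(p,2) for all p ≥ 0. -/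
set_option synthInstance.maxHeartbeats 4000000
set_option maxHeartbeats 1000000
set_option maxSynthPendingDepth 3

/-!
Write `aᵢ = eᵢ` and let `bᵢ` be the basis vector dual to `aᵢ` under `w`, so that `w = ∑ aᵢ ∧ bᵢ` and
`X bᵢ = aᵢ`, `X aᵢ = 0`. Sorting three-forms by the number of factors `b` identifies `⋀³V` with
quadruples `(t, M, P, u)` of two scalars and two `3 × 3` matrices; a coordinate is read off by
multiplying with the complementary product of `a`s and `b`s. In these coordinates `w ∧ α = 0` says
that `M` and `P` are symmetric, which leaves `1 + 6 + 6 + 1` dimensions, and `D_X` becomes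
`(t, M, P, u) ↦ (0, t • 1, tr M • 1 - Mᵀ, tr P)`. Its square `(0, 0, 2t • 1, 2 tr M)` and its cube
`(0, 0, 0, 6t)` show that the kernels of the powers on symmetric quadruples have dimensions
`6, 12, 13, 14`.
-/

namespace SymplecticThreeForm

open ExteriorAlgebra Module Matrix

section Finrank

section Semiring

variable {R M N : Type*} [Semiring R] [AddCommMonoid M] [Module R M] [AddCommMonoid N] [Module R N]

lemma finrank_comap_subtype (p q : Submodule R M) :
    finrank R (p.comap q.subtype) = finrank R (p ⊓ q : Submodule R M) := by
  rw [inf_comm, ← Submodule.map_comap_subtype, Submodule.finrank_map_subtype_eq]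

lemma finrank_comap_equiv (e : M ≃ₗ[R] N) (p : Submodule R N) :
    finrank R (p.comap e.toLinearMap) = finrank R p := by
  rw [Submodule.comap_equiv_eq_map_symm, LinearEquiv.finrank_map_eq]

lemma finrank_ker_restrict_pow {f : End R M} {p : Submodule R M} (h : ∀ x ∈ p, f x ∈ p) (k : ℕ) :
    finrank R (LinearMap.ker (f.restrict h ^ k)) =
      finrank R (LinearMap.ker (f ^ k) ⊓ p : Submodule R M) := by
  rw [Module.End.pow_restrict, LinearMap.ker_restrict, finrank_comap_subtype]

lemma finrank_ker_restrict_conj_pow (e : M ≃ₗ[R] N) (f : End R M) {p : Submodule R N}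
    (h : ∀ y ∈ p, e.conjRingEquiv f y ∈ p) (k : ℕ) :
    finrank R (LinearMap.ker ((e.conjRingEquiv f).restrict h ^ k)) =
      finrank R (LinearMap.ker (f ^ k) ⊓ p.comap e.toLinearMap : Submodule R M) := by
  have comap_ker : (LinearMap.ker (e.conjRingEquiv f ^ k)).comap e.toLinearMap =
      LinearMap.ker (f ^ k) := by
    ext x
    simp [← map_pow]
  rw [finrank_ker_restrict_pow, ← finrank_comap_equiv e, Submodule.comap_inf, comap_ker]

end Semiring

lemma finrank_submodule_prod {K V W : Type*} [DivisionRing K] [AddCommGroup V] [Module K V]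
    [AddCommGroup W] [Module K W] [FiniteDimensional K V] [FiniteDimensional K W]
    (p : Submodule K V) (q : Submodule K W) :
    finrank K (p.prod q) = finrank K p + finrank K q := by
  have injective : Function.Injective (p.subtype.prodMap q.subtype) :=
    p.subtype_injective.prodMap q.subtype_injective
  rw [← finrank_prod, ← LinearMap.finrank_range_of_inj injective, LinearMap.range_prodMap,
    Submodule.range_subtype, Submodule.range_subtype]

end Finrank

section SymmetricMatrices

variable (n R : Type*) [CommRing R]

/-- The symmetric matrices, as a submodule of all matrices. -/
def symmetricMatrices : Submodule R (Matrix n n R) where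
  carrier := {M | M.IsSymm}
  add_mem' := IsSymm.add
  zero_mem' := isSymm_zero
  smul_mem' r _ hM := hM.smul r

/-- A symmetric matrix is a function on unordered pairs of indices. -/
def symmetricMatricesEquiv : symmetricMatrices n R ≃ₗ[R] (Sym2 n → R) where
  toFun M := Sym2.lift ⟨M.1, fun i j ↦ M.2.apply j i⟩
  map_add' M N := by ext ⟨i, j⟩; rfl
  map_smul' r M := by ext ⟨i, j⟩; rfl
  invFun f := ⟨fun i j ↦ f s(i, j), by ext i j; exact congrArg f Sym2.eq_swap⟩
  left_inv M := rfl
  right_inv f := by ext ⟨i, j⟩; rfl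

lemma finrank_symmetricMatrices [StrongRankCondition R] [Fintype n] :
    finrank R (symmetricMatrices n R) = (Fintype.card n + 1).choose 2 := by
  classical
  rw [(symmetricMatricesEquiv n R).finrank_eq, finrank_fintype_fun_eq_card, Sym2.card]

lemma finrank_symmetricMatrices_inf_ker_trace (K : Type*) [Field K] [Fintype n] [Nonempty n] :
    finrank K (symmetricMatrices n K ⊓ LinearMap.ker (traceLinearMap n K K) : Submodule K _) + 1 =
      finrank K (symmetricMatrices n K) := by
  classical
  let symmetricTrace := (traceLinearMap n K K).comp (symmetricMatrices n K).subtype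
  have surjective : Function.Surjective symmetricTrace := fun r ↦
    ⟨⟨diagonal (Pi.single (Classical.arbitrary n) r), isSymm_diagonal _⟩,
      by simp [symmetricTrace, trace]⟩
  rw [← symmetricTrace.finrank_range_add_finrank_ker, LinearMap.range_eq_top.2 surjective,
    finrank_top, finrank_self, LinearMap.ker_comp, finrank_comap_subtype,
    inf_comm, add_comm]

end SymmetricMatrices

section CyclicIndices

lemma eq_or_eq_add_one_or_eq_add_two (i j : Fin 3) : i = j ∨ i = j + 1 ∨ i = j + 2 := by
  revert i j
  decide

lemma sum_eq_cyclic {A : Type*} [AddCommMonoid A] (f : Fin 3 → A) (i : Fin 3) :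
    ∑ k, f k = f i + f (i + 1) + f (i + 2) := by
  rw [← Equiv.sum_comp (Equiv.addLeft i) f, Fin.sum_univ_three]
  simp

end CyclicIndices

section ExteriorAlgebra

variable (R : Type*) {V : Type*} [CommRing R] [AddCommGroup V] [Module R V]

/-- The `i`-th two-form `v (i + 1) ∧ v (i + 2)` of a triple of vectors. The indices are cyclic, so
that `v i ∧ cofactorForm R v i` is the same three-form for every `i`, without signs. -/
def cofactorForm (v : Fin 3 → V) (i : Fin 3) : ExteriorAlgebra R V :=
  ι R (v (i + 1)) * ι R (v (i + 2))

/-- The three-form `v 0 ∧ v 1 ∧ v 2` of a triple of vectors. -/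
def volumeForm (v : Fin 3 → V) : ExteriorAlgebra R V :=
  ιMulti R 3 v

variable {R}

lemma ι_mul_ι_comm (x y : V) : ι R x * ι R y = -(ι R y * ι R x) :=
  eq_neg_of_add_eq_zero_left (ι_add_mul_swap x y)

lemma ι_mul_ι_mul_self (x : V) (α : ExteriorAlgebra R V) : ι R x * (ι R x * α) = 0 := by
  rw [← mul_assoc, ι_sq_zero, zero_mul]

lemma ι_mul_cofactorForm_comm (x : V) (v : Fin 3 → V) (i : Fin 3) :
    ι R x * cofactorForm R v i = cofactorForm R v i * ι R x := by
  rw [cofactorForm, ← mul_assoc, ι_mul_ι_comm x, neg_mul, mul_assoc, ι_mul_ι_comm x, mul_neg,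
    neg_neg, mul_assoc]

lemma ιMulti_three_apply (v : Fin 3 → V) :
    ιMulti R 3 v = ι R (v 0) * (ι R (v 1) * ι R (v 2)) := by
  rw [ιMulti_apply]
  simp [List.ofFn_succ]

lemma ι_mul_cofactorForm_self (v : Fin 3 → V) (i : Fin 3) :
    ι R (v i) * cofactorForm R v i = volumeForm R v := by
  have rotate (j : Fin 3) :
      ι R (v (j + 1)) * cofactorForm R v (j + 1) = ι R (v j) * cofactorForm R v j := by
    have shift : j + 1 + 1 = j + 2 ∧ j + 1 + 2 = j := by revert j; decide
    rw [ι_mul_cofactorForm_comm (v j), cofactorForm, cofactorForm, shift.1, shift.2, mul_assoc]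
  fin_cases i
  · exact (ιMulti_three_apply v).symm
  · exact (rotate 0).trans (ιMulti_three_apply v).symm
  · exact ((rotate 1).trans (rotate 0)).trans (ιMulti_three_apply v).symm

lemma ι_mul_cofactorForm (v : Fin 3 → V) (i j : Fin 3) :
    ι R (v i) * cofactorForm R v j = if i = j then volumeForm R v else 0 := by
  obtain rfl | rfl | rfl := eq_or_eq_add_one_or_eq_add_two i j
  · simp [ι_mul_cofactorForm_self]
  · simp [cofactorForm, ι_mul_ι_mul_self]
  · rw [ι_mul_cofactorForm_comm]
    simp [cofactorForm, mul_assoc]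

lemma cofactorForm_mul_ι (v : Fin 3 → V) (i j : Fin 3) :
    cofactorForm R v i * ι R (v j) = if i = j then volumeForm R v else 0 := by
  rw [← ι_mul_cofactorForm_comm, ι_mul_cofactorForm, if_congr eq_comm rfl rfl]

lemma ι_mul_volumeForm (v : Fin 3 → V) (i : Fin 3) : ι R (v i) * volumeForm R v = 0 := by
  rw [← ι_mul_cofactorForm_self v i, ι_mul_ι_mul_self]

lemma ι_mul_volumeForm_comm (x : V) (v : Fin 3 → V) :
    ι R x * volumeForm R v = -(volumeForm R v * ι R x) := by
  rw [← ι_mul_cofactorForm_self v 0, ← mul_assoc, ι_mul_ι_comm x, neg_mul, mul_assoc,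
    ι_mul_cofactorForm_comm, mul_assoc]

lemma volumeForm_mul_ι (v : Fin 3 → V) (i : Fin 3) : volumeForm R v * ι R (v i) = 0 := by
  rw [← neg_eq_zero, ← ι_mul_volumeForm_comm, ι_mul_volumeForm]

lemma volumeForm_mul_cofactorForm (v : Fin 3 → V) (i : Fin 3) :
    volumeForm R v * cofactorForm R v i = 0 := by
  rw [cofactorForm, ← mul_assoc, volumeForm_mul_ι, zero_mul]

lemma cofactorForm_mul_volumeForm (v : Fin 3 → V) (i : Fin 3) :
    cofactorForm R v i * volumeForm R v = 0 := by
  rw [cofactorForm, mul_assoc, ι_mul_volumeForm, mul_zero]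

lemma volumeForm_mul_self (v : Fin 3 → V) : volumeForm R v * volumeForm R v = 0 := by
  nth_rw 1 [← ι_mul_cofactorForm_self v 0]
  rw [mul_assoc, cofactorForm_mul_volumeForm, mul_zero]

lemma cofactorForm_mul_cofactorForm (v : Fin 3 → V) (i j : Fin 3) :
    cofactorForm R v i * cofactorForm R v j = 0 := by
  rw [cofactorForm, mul_assoc, ι_mul_cofactorForm]
  split_ifs
  · exact ι_mul_volumeForm v _
  · exact mul_zero _

/-- The axial vector of a `3 × 3` matrix, which measures its failure to be symmetric. -/
def axialVector (M : Matrix (Fin 3) (Fin 3) R) (k : Fin 3) : R :=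
  M (k + 1) (k + 2) - M (k + 2) (k + 1)

lemma axialVector_eq_zero_iff {M : Matrix (Fin 3) (Fin 3) R} :
    axialVector M = 0 ↔ M.IsSymm := by
  rw [Matrix.IsSymm.ext_iff]
  constructor
  · intro h i j
    have h0 := congrFun h 0
    have h1 := congrFun h 1
    have h2 := congrFun h 2
    simp only [axialVector, Pi.zero_apply, sub_eq_zero, Fin.reduceAdd, zero_add] at h0 h1 h2
    fin_cases i <;> fin_cases j <;> simp [h0, h1, h2]
  · intro h
    ext k
    simp [axialVector, h]

lemma sum_smul_ι_mul_ι (v : Fin 3 → V) (M : Matrix (Fin 3) (Fin 3) R) :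
    ∑ i, ∑ j, M i j • (ι R (v i) * ι R (v j)) = ∑ k, axialVector M k • cofactorForm R v k := by
  simp only [Fin.sum_univ_three, ι_sq_zero, cofactorForm, axialVector, Fin.reduceAdd]
  rw [ι_mul_ι_comm (v 1) (v 0), ι_mul_ι_comm (v 2) (v 1), ι_mul_ι_comm (v 0) (v 2)]
  module

lemma smul_volumeForm_mul_volumeForm_eq_zero_iff (e : Basis (Fin 3 ⊕ Fin 3) R V) {r : R} :
    r • (volumeForm R (e ∘ Sum.inl) * volumeForm R (e ∘ Sum.inr)) = 0 ↔ r = 0 := by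
  refine ⟨fun h ↦ ?_, fun h ↦ by rw [h, zero_smul]⟩
  let e' : Basis (Fin (3 + 3)) R V := e.reindex finSumFinEquiv
  have append_eq : Fin.append (e ∘ Sum.inl) (e ∘ Sum.inr) = e' := by
    ext i
    refine i.addCases (fun i ↦ ?_) (fun i ↦ ?_)
    · rw [Fin.append_left, Basis.reindex_apply, finSumFinEquiv_symm_apply_castAdd]; rfl
    · rw [Fin.append_right, Basis.reindex_apply, finSumFinEquiv_symm_apply_natAdd]; rfl
  -- The determinant extends to a linear form on the whole exterior algebra.
  have := congrArg (liftAlternating (Pi.single (3 + 3) e'.det)) h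
  rwa [volumeForm, volumeForm, ιMulti_mul_ιMulti, append_eq, map_smul,
    liftAlternating_apply_ιMulti, Pi.single_eq_same, e'.det_self, smul_eq_mul, mul_one,
    map_zero] at this

end ExteriorAlgebra

section Coordinates

variable {R V : Type*} [CommRing R] [AddCommGroup V] [Module R V]

variable (R) in
/-- Coordinates for three-forms on a space split into two triples `a` and `b`, graded by the number
of factors from `b`: see `threeForm`. -/
abbrev Coords : Type _ :=
  R × Matrix (Fin 3) (Fin 3) R × Matrix (Fin 3) (Fin 3) R × R

/-- `(t, M, P, u)` are the coordinates of
`t b₀∧b₁∧b₂ + ∑ Mᵢⱼ aᵢ∧bⱼ₊₁∧bⱼ₊₂ + ∑ Pᵢⱼ aᵢ₊₁∧aᵢ₊₂∧bⱼ + u a₀∧a₁∧a₂`, with cyclic indices. -/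
def threeForm (a b : Fin 3 → V) : Coords R →ₗ[R] ⋀[R]^3 V where
  toFun x := x.1 • exteriorPower.ιMulti R 3 b +
    ∑ i, ∑ j, x.2.1 i j • exteriorPower.ιMulti R 3 ![a i, b (j + 1), b (j + 2)] +
    ∑ i, ∑ j, x.2.2.1 i j • exteriorPower.ιMulti R 3 ![a (i + 1), a (i + 2), b j] +
    x.2.2.2 • exteriorPower.ιMulti R 3 a
  map_add' x y := by
    simp only [Prod.fst_add, Prod.snd_add, Matrix.add_apply, add_smul, Finset.sum_add_distrib]
    abel
  map_smul' r x := by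
    simp only [Prod.smul_fst, Prod.smul_snd, Matrix.smul_apply, smul_assoc, smul_add,
      Finset.smul_sum, RingHom.id_apply]

variable (R) in
/-- The two-form `∑ i, a i ∧ b i`. -/
def symplecticForm (a b : Fin 3 → V) : ExteriorAlgebra R V :=
  ∑ i, ι R (a i) * ι R (b i)

lemma coe_threeForm (a b : Fin 3 → V) (t : R) (M P : Matrix (Fin 3) (Fin 3) R) (u : R) :
    (threeForm a b (t, M, P, u) : ExteriorAlgebra R V) =
      t • volumeForm R b + ∑ i, ∑ j, M i j • (ι R (a i) * cofactorForm R b j) +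
        ∑ i, ∑ j, P i j • (cofactorForm R a i * ι R (b j)) + u • volumeForm R a := by
  simp only [threeForm, LinearMap.coe_mk, AddHom.coe_mk, Submodule.coe_add, Submodule.coe_smul,
    Submodule.coe_sum, exteriorPower.ιMulti_apply_coe, volumeForm, ιMulti_three_apply]
  simp [cofactorForm, mul_assoc]

lemma volumeForm_mul_threeForm (a b : Fin 3 → V) (x : Coords R) :
    volumeForm R a * (threeForm a b x : ExteriorAlgebra R V) =
      x.1 • (volumeForm R a * volumeForm R b) := by
  obtain ⟨t, M, P, u⟩ := x
  simp [coe_threeForm, mul_add, Finset.mul_sum, ← mul_assoc, volumeForm_mul_ι,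
    volumeForm_mul_cofactorForm, volumeForm_mul_self]

lemma threeForm_mul_volumeForm (a b : Fin 3 → V) (x : Coords R) :
    (threeForm a b x : ExteriorAlgebra R V) * volumeForm R b =
      x.2.2.2 • (volumeForm R a * volumeForm R b) := by
  obtain ⟨t, M, P, u⟩ := x
  simp [coe_threeForm, add_mul, Finset.sum_mul, mul_assoc, ι_mul_volumeForm,
    cofactorForm_mul_volumeForm, volumeForm_mul_self]

lemma cofactorForm_mul_threeForm_mul_ι (a b : Fin 3 → V) (x : Coords R) (k l : Fin 3) :
    cofactorForm R a k * (threeForm a b x : ExteriorAlgebra R V) * ι R (b l) =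
      x.2.1 k l • (volumeForm R a * volumeForm R b) := by
  obtain ⟨t, M, P, u⟩ := x
  have hM (i j : Fin 3) : cofactorForm R a k * (ι R (a i) * (cofactorForm R b j * ι R (b l))) =
      if k = i then if j = l then volumeForm R a * volumeForm R b else 0 else 0 := by
    rw [← mul_assoc, cofactorForm_mul_ι, cofactorForm_mul_ι, ite_zero_mul_ite_zero, ite_and]
  have hP (i : Fin 3) (α : ExteriorAlgebra R V) :
      cofactorForm R a k * (cofactorForm R a i * α) = 0 := by
    rw [← mul_assoc, cofactorForm_mul_cofactorForm, zero_mul]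
  have hu (α : ExteriorAlgebra R V) : cofactorForm R a k * (volumeForm R a * α) = 0 := by
    rw [← mul_assoc, cofactorForm_mul_volumeForm, zero_mul]
  simp [coe_threeForm, mul_add, add_mul, Finset.mul_sum, Finset.sum_mul, mul_assoc, hM, hP, hu,
    volumeForm_mul_ι]

lemma ι_mul_threeForm_mul_cofactorForm (a b : Fin 3 → V) (x : Coords R) (k l : Fin 3) :
    ι R (a k) * (threeForm a b x : ExteriorAlgebra R V) * cofactorForm R b l =
      x.2.2.1 k l • (volumeForm R a * volumeForm R b) := by
  obtain ⟨t, M, P, u⟩ := x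
  have hP (i j : Fin 3) : ι R (a k) * (cofactorForm R a i * (ι R (b j) * cofactorForm R b l)) =
      if k = i then if j = l then volumeForm R a * volumeForm R b else 0 else 0 := by
    rw [← mul_assoc, ι_mul_cofactorForm, ι_mul_cofactorForm, ite_zero_mul_ite_zero, ite_and]
  have hu (α : ExteriorAlgebra R V) : ι R (a k) * (volumeForm R a * α) = 0 := by
    rw [← mul_assoc, ι_mul_volumeForm, zero_mul]
  simp [coe_threeForm, mul_add, add_mul, Finset.mul_sum, Finset.sum_mul, mul_assoc, hP, hu,
    volumeForm_mul_cofactorForm, cofactorForm_mul_cofactorForm]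

theorem threeForm_injective (e : Basis (Fin 3 ⊕ Fin 3) R V) :
    Function.Injective (threeForm (R := R) (e ∘ Sum.inl) (e ∘ Sum.inr)) := by
  rw [← LinearMap.ker_eq_bot, LinearMap.ker_eq_bot']
  intro x hx
  have hx' : (threeForm (e ∘ Sum.inl) (e ∘ Sum.inr) x : ExteriorAlgebra R V) = 0 := by simp [hx]
  have ht : x.1 = 0 := by
    rw [← smul_volumeForm_mul_volumeForm_eq_zero_iff e, ← volumeForm_mul_threeForm, hx', mul_zero]
  have hM : x.2.1 = 0 := by
    ext k l
    refine (smul_volumeForm_mul_volumeForm_eq_zero_iff e).1 ?_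
    rw [← cofactorForm_mul_threeForm_mul_ι, hx', mul_zero, zero_mul]
  have hP : x.2.2.1 = 0 := by
    ext k l
    refine (smul_volumeForm_mul_volumeForm_eq_zero_iff e).1 ?_
    rw [← ι_mul_threeForm_mul_cofactorForm, hx', mul_zero, zero_mul]
  have hu : x.2.2.2 = 0 := by
    rw [← smul_volumeForm_mul_volumeForm_eq_zero_iff e, ← threeForm_mul_volumeForm, hx', zero_mul]
  exact Prod.ext ht (Prod.ext hM (Prod.ext hP hu))

/-- Every three-form has unique coordinates with respect to a basis split into two triples. -/
noncomputable def threeFormEquiv {K V : Type*} [Field K] [AddCommGroup V]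
    [Module K V] (e : Basis (Fin 3 ⊕ Fin 3) K V) : Coords K ≃ₗ[K] ⋀[K]^3 V :=
  have := Module.Finite.of_basis e
  LinearEquiv.ofInjectiveOfFinrankEq (threeForm (e ∘ Sum.inl) (e ∘ Sum.inr))
    (threeForm_injective e) <| by
    rw [exteriorPower.finrank_eq, finrank_eq_card_basis e]
    simp [finrank_matrix, Nat.choose]

lemma symplecticForm_mul_volumeForm_left (a b : Fin 3 → V) :
    symplecticForm R a b * volumeForm R a = 0 := by
  simp [symplecticForm, Finset.sum_mul, mul_assoc, ι_mul_volumeForm_comm (b _),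
    ← mul_assoc (ι R (a _)) (volumeForm R a), ι_mul_volumeForm]

lemma symplecticForm_mul_volumeForm_right (a b : Fin 3 → V) :
    symplecticForm R a b * volumeForm R b = 0 := by
  simp [symplecticForm, Finset.sum_mul, mul_assoc, ι_mul_volumeForm]

lemma symplecticForm_mul_ι_mul_cofactorForm (a b : Fin 3 → V) (i j : Fin 3) :
    symplecticForm R a b * (ι R (a i) * cofactorForm R b j) =
      ι R (a i) * ι R (a j) * volumeForm R b := by
  have term (k : Fin 3) : ι R (a k) * ι R (b k) * (ι R (a i) * cofactorForm R b j) =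
      if k = j then ι R (a i) * ι R (a k) * volumeForm R b else 0 := calc
    _ = -(ι R (a k) * ι R (a i)) * (ι R (b k) * cofactorForm R b j) := by
      rw [mul_assoc, ← mul_assoc (ι R (b k)), ι_mul_ι_comm (b k)]
      noncomm_ring
    _ = _ := by rw [← ι_mul_ι_comm, ι_mul_cofactorForm, mul_ite, mul_zero]
  simp [symplecticForm, Finset.sum_mul, term]

lemma symplecticForm_mul_cofactorForm_mul_ι (a b : Fin 3 → V) (i j : Fin 3) :
    symplecticForm R a b * (cofactorForm R a i * ι R (b j)) =
      volumeForm R a * (ι R (b i) * ι R (b j)) := by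
  have term (k : Fin 3) : ι R (a k) * ι R (b k) * (cofactorForm R a i * ι R (b j)) =
      if k = i then volumeForm R a * (ι R (b k) * ι R (b j)) else 0 := calc
    _ = ι R (a k) * cofactorForm R a i * (ι R (b k) * ι R (b j)) := by
      rw [mul_assoc, ← mul_assoc (ι R (b k)), ι_mul_cofactorForm_comm]
      noncomm_ring
    _ = _ := by rw [ι_mul_cofactorForm, ite_mul, zero_mul]
  simp [symplecticForm, Finset.sum_mul, term]

lemma symplecticForm_mul_threeForm (a b : Fin 3 → V) (x : Coords R) :
    symplecticForm R a b * (threeForm a b x : ExteriorAlgebra R V) =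
      (∑ k, axialVector x.2.1 k • cofactorForm R a k) * volumeForm R b +
        volumeForm R a * ∑ k, axialVector x.2.2.1 k • cofactorForm R b k := by
  obtain ⟨t, M, P, u⟩ := x
  simp [coe_threeForm, mul_add, Finset.mul_sum, Finset.sum_mul, symplecticForm_mul_volumeForm_left,
    symplecticForm_mul_volumeForm_right, symplecticForm_mul_ι_mul_cofactorForm,
    symplecticForm_mul_cofactorForm_mul_ι, ← sum_smul_ι_mul_ι]

lemma ι_mul_symplecticForm_mul_threeForm (a b : Fin 3 → V) (x : Coords R) (k : Fin 3) :
    ι R (a k) * (symplecticForm R a b * (threeForm a b x : ExteriorAlgebra R V)) =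
      axialVector x.2.1 k • (volumeForm R a * volumeForm R b) := by
  simp [symplecticForm_mul_threeForm, mul_add, ← mul_assoc, Finset.mul_sum, ι_mul_cofactorForm,
    ι_mul_volumeForm]

lemma symplecticForm_mul_threeForm_mul_ι (a b : Fin 3 → V) (x : Coords R) (k : Fin 3) :
    symplecticForm R a b * (threeForm a b x : ExteriorAlgebra R V) * ι R (b k) =
      axialVector x.2.2.1 k • (volumeForm R a * volumeForm R b) := by
  simp [symplecticForm_mul_threeForm, add_mul, mul_assoc, Finset.sum_mul, cofactorForm_mul_ι,
    volumeForm_mul_ι]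

lemma symplecticForm_mul_threeForm_eq_zero_iff (e : Basis (Fin 3 ⊕ Fin 3) R V) {x : Coords R} :
    symplecticForm R (e ∘ Sum.inl) (e ∘ Sum.inr) *
        (threeForm (e ∘ Sum.inl) (e ∘ Sum.inr) x : ExteriorAlgebra R V) = 0 ↔
      x.2.1.IsSymm ∧ x.2.2.1.IsSymm := by
  rw [← axialVector_eq_zero_iff, ← axialVector_eq_zero_iff]
  refine ⟨fun h ↦ ⟨funext fun k ↦ ?_, funext fun k ↦ ?_⟩, fun h ↦ ?_⟩
  · refine (smul_volumeForm_mul_volumeForm_eq_zero_iff e).1 ?_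
    rw [← ι_mul_symplecticForm_mul_threeForm, h, mul_zero]
  · refine (smul_volumeForm_mul_volumeForm_eq_zero_iff e).1 ?_
    rw [← symplecticForm_mul_threeForm_mul_ι, h, zero_mul]
  · simp [symplecticForm_mul_threeForm, h]

variable (R) in
/-- The operator on coordinates induced by the derivation extension of the endomorphism with
`b i ↦ a i ↦ 0`: see `IsDerivationExtension.apply_threeForm`. -/
def lowering : End R (Coords R) where
  toFun x := (0, x.1 • 1, x.2.1.trace • 1 - x.2.1ᵀ, x.2.2.1.trace)
  map_add' x y := by
    simp only [Prod.fst_add, Prod.snd_add, trace_add, transpose_add, add_smul, Prod.mk_add_mk,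
      add_zero, add_sub_add_comm]
  map_smul' r x := by
    simp only [Prod.smul_fst, Prod.smul_snd, trace_smul, transpose_smul, smul_assoc, Prod.smul_mk,
      smul_zero, smul_sub, RingHom.id_apply]

lemma lowering_apply (x : Coords R) :
    lowering R x = (0, x.1 • 1, x.2.1.trace • 1 - x.2.1ᵀ, x.2.2.1.trace) := rfl

lemma lowering_pow_two_apply (x : Coords R) :
    (lowering R ^ 2) x = (0, 0, (2 * x.1) • 1, 2 * x.2.1.trace) := by
  rw [pow_two, Module.End.mul_apply, lowering_apply, lowering_apply]
  simp only [zero_smul, trace_sub, trace_smul, trace_transpose, trace_one, Fintype.card_fin,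
    transpose_smul, transpose_one, ← sub_smul, smul_eq_mul, Nat.cast_ofNat, Prod.mk.injEq,
    true_and]
  constructor
  · congr 1
    ring
  · ring

lemma lowering_pow_three_apply (x : Coords R) : (lowering R ^ 3) x = (0, 0, 0, 6 * x.1) := by
  rw [pow_succ', Module.End.mul_apply, lowering_pow_two_apply, lowering_apply]
  simp only [zero_smul, trace_zero, transpose_zero, sub_zero, trace_smul, trace_one,
    Fintype.card_fin, smul_eq_mul, Nat.cast_ofNat, Prod.mk.injEq, true_and]
  ring

lemma lowering_pow_four : lowering R ^ 4 = 0 := by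
  refine LinearMap.ext fun x ↦ ?_
  rw [pow_succ', Module.End.mul_apply, lowering_pow_three_apply, lowering_apply]
  simp

/-- `D` is the derivation extension of the endomorphism `X` to the `n`-th exterior power. -/
def IsDerivationExtension {n : ℕ} (X : End R V) (D : End R (⋀[R]^n V)) : Prop :=
  ∀ v : Fin n → V, D (exteriorPower.ιMulti R n v) =
    ∑ i, exteriorPower.ιMulti R n (Function.update v i (X (v i)))

lemma IsDerivationExtension.coe_apply_ιMulti_three {X : End R V} {D : End R (⋀[R]^3 V)}
    (hD : IsDerivationExtension X D) (v : Fin 3 → V) :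
    (D (exteriorPower.ιMulti R 3 v) : ExteriorAlgebra R V) =
      ι R (X (v 0)) * (ι R (v 1) * ι R (v 2)) + ι R (v 0) * (ι R (X (v 1)) * ι R (v 2)) +
        ι R (v 0) * (ι R (v 1) * ι R (X (v 2))) := by
  rw [hD, Fin.sum_univ_three]
  simp only [Submodule.coe_add, exteriorPower.ιMulti_apply_coe, ιMulti_three_apply]
  simp [Function.update]

section Derivation

variable {a b : Fin 3 → V} {X : End R V} {D : End R (⋀[R]^3 V)}

lemma IsDerivationExtension.coe_apply_ιMulti_b (hD : IsDerivationExtension X D)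
    (hXb : ∀ i, X (b i) = a i) :
    (D (exteriorPower.ιMulti R 3 b) : ExteriorAlgebra R V) =
      ∑ i, ι R (a i) * cofactorForm R b i := by
  have h1 : ι R (b 0) * (ι R (a 1) * ι R (b 2)) = ι R (a 1) * cofactorForm R b 1 := by
    rw [← mul_assoc, ι_mul_ι_comm (b 0), neg_mul, mul_assoc, ι_mul_ι_comm (b 0), mul_neg, neg_neg]
    rfl
  have h2 : ι R (b 0) * (ι R (b 1) * ι R (a 2)) = ι R (a 2) * cofactorForm R b 2 := by
    rw [← mul_assoc, ι_mul_cofactorForm_comm]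
    rfl
  rw [hD.coe_apply_ιMulti_three, hXb, hXb, hXb, h1, h2, Fin.sum_univ_three]
  rfl

lemma IsDerivationExtension.coe_apply_ιMulti_abb (hD : IsDerivationExtension X D)
    (hXa : ∀ i, X (a i) = 0) (hXb : ∀ i, X (b i) = a i) (i j : Fin 3) :
    (D (exteriorPower.ιMulti R 3 ![a i, b (j + 1), b (j + 2)]) : ExteriorAlgebra R V) =
      (if i = j then ∑ k, cofactorForm R a k * ι R (b k) else 0) -
        cofactorForm R a j * ι R (b i) := by
  have expand : (D (exteriorPower.ιMulti R 3 ![a i, b (j + 1), b (j + 2)]) : ExteriorAlgebra R V) =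
      ι R (a i) * (ι R (a (j + 1)) * ι R (b (j + 2))) -
        ι R (a i) * (ι R (a (j + 2)) * ι R (b (j + 1))) := by
    rw [hD.coe_apply_ιMulti_three]
    simp [hXa, hXb, ι_mul_ι_comm (b (j + 1)) (a (j + 2)), sub_eq_add_neg]
  rw [expand, ← mul_assoc, ← mul_assoc]
  obtain rfl | rfl | rfl := eq_or_eq_add_one_or_eq_add_two i j
  · have index_add : i + 1 + 1 = i + 2 ∧ i + 1 + 2 = i ∧ i + 2 + 1 = i ∧ i + 2 + 2 = i + 1 := by
      clear expand
      revert i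
      decide
    rw [if_pos rfl, sum_eq_cyclic _ i, cofactorForm, cofactorForm, cofactorForm, index_add.1,
      index_add.2.1, index_add.2.2.1, index_add.2.2.2, ι_mul_ι_comm (a i) (a (i + 2))]
    noncomm_ring
  · simp [cofactorForm, mul_assoc]
  · simp [cofactorForm, ι_mul_ι_comm (a (j + 2)) (a (j + 1))]

lemma IsDerivationExtension.coe_apply_ιMulti_aab (hD : IsDerivationExtension X D)
    (hXa : ∀ i, X (a i) = 0) (hXb : ∀ i, X (b i) = a i) (i j : Fin 3) :
    (D (exteriorPower.ιMulti R 3 ![a (i + 1), a (i + 2), b j]) : ExteriorAlgebra R V) =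
      if i = j then volumeForm R a else 0 := by
  rw [hD.coe_apply_ιMulti_three]
  simp [hXa, hXb, ← cofactorForm_mul_ι, cofactorForm, mul_assoc]

theorem IsDerivationExtension.apply_threeForm (hD : IsDerivationExtension X D)
    (hXa : ∀ i, X (a i) = 0) (hXb : ∀ i, X (b i) = a i) (x : Coords R) :
    D (threeForm a b x) = threeForm a b (lowering R x) := by
  obtain ⟨t, M, P, u⟩ := x
  have ha : (D (exteriorPower.ιMulti R 3 a) : ExteriorAlgebra R V) = 0 := by
    simp [hD.coe_apply_ιMulti_three, hXa]
  refine Subtype.ext ?_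
  rw [lowering_apply, coe_threeForm, threeForm]
  simp only [LinearMap.coe_mk, AddHom.coe_mk, map_add, map_sum, map_smul, Submodule.coe_add,
    Submodule.coe_smul, Submodule.coe_sum, ha, hD.coe_apply_ιMulti_b hXb,
    hD.coe_apply_ιMulti_abb hXa hXb, hD.coe_apply_ιMulti_aab hXa hXb]
  have hP : ∑ i, P i i • volumeForm R a = P.trace • volumeForm R a := by
    rw [← Finset.sum_smul]
    rfl
  have hM : ∑ i, ∑ j, M i j • ((if i = j then ∑ k, cofactorForm R a k * ι R (b k) else 0) -
        cofactorForm R a j * ι R (b i)) =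
      ∑ i, ∑ j, (M.trace • 1 - Mᵀ) i j • (cofactorForm R a i * ι R (b j)) := by
    simp only [smul_sub, sub_smul, Finset.sum_sub_distrib, Matrix.sub_apply, transpose_apply]
    congr 1
    · simp [one_apply, trace, ← Finset.sum_smul, ← Finset.smul_sum]
    · exact Finset.sum_comm
  simp [hM, hP, one_apply, Finset.smul_sum]

end Derivation

section JordanType

variable (R) in
/-- The coordinates of the three-forms annihilated by the symplectic form:
see `symplecticForm_mul_threeForm_eq_zero_iff`. -/
def symmetricCoords : Submodule R (Coords R) :=
  (⊤ : Submodule R R).prod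
    ((symmetricMatrices (Fin 3) R).prod ((symmetricMatrices (Fin 3) R).prod ⊤))

lemma mem_symmetricCoords {x : Coords R} :
    x ∈ symmetricCoords R ↔ x.2.1.IsSymm ∧ x.2.2.1.IsSymm := by
  simp [symmetricCoords, Submodule.mem_prod, symmetricMatrices]

lemma lowering_mem_symmetricCoords {x : Coords R} (hx : x ∈ symmetricCoords R) :
    lowering R x ∈ symmetricCoords R := by
  rw [mem_symmetricCoords] at hx ⊢
  exact ⟨isSymm_one.smul _, (isSymm_one.smul _).sub hx.1.transpose⟩

lemma trace_smul_one_sub_transpose_eq_zero_iff [NoZeroDivisors R] {n : Type*} [Fintype n]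
    [DecidableEq n] (hn : (Fintype.card n : R) ≠ 1) {M : Matrix n n R} :
    M.trace • 1 - Mᵀ = 0 ↔ M = 0 := by
  refine ⟨fun h ↦ ?_, fun h ↦ by simp [h]⟩
  have card_sub_one_mul_trace : ((Fintype.card n : R) - 1) * M.trace = 0 := by
    have trace_eq := congrArg trace h
    rw [trace_sub, trace_smul, trace_one, trace_transpose, trace_zero, smul_eq_mul] at trace_eq
    linear_combination trace_eq
  have trace_eq_zero : M.trace = 0 :=
    (mul_eq_zero.1 card_sub_one_mul_trace).resolve_left (sub_ne_zero.2 hn)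
  simpa [trace_eq_zero] using h

lemma ker_lowering_inf_symmetricCoords [NoZeroDivisors R] (h2 : (2 : R) ≠ 0) :
    LinearMap.ker (lowering R) ⊓ symmetricCoords R =
      (⊥ : Submodule R R).prod ((⊥ : Submodule R _).prod
        ((symmetricMatrices (Fin 3) R ⊓ LinearMap.ker (traceLinearMap (Fin 3) R R)).prod ⊤)) := by
  have := nontrivial_of_ne _ _ h2
  have card_ne_one : (Fintype.card (Fin 3) : R) ≠ 1 := fun h ↦ h2 <| by
    rw [Fintype.card_fin, Nat.cast_ofNat] at h
    linear_combination h
  ext ⟨t, M, P, u⟩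
  simp only [symmetricCoords, Submodule.mem_inf, LinearMap.mem_ker, lowering_apply,
    Prod.mk_eq_zero, smul_eq_zero, one_ne_zero, or_false,
    trace_smul_one_sub_transpose_eq_zero_iff card_ne_one, true_and, Submodule.mem_prod,
    Submodule.mem_top, and_true, Submodule.mem_bot, traceLinearMap_apply]
  grind [zero_mem]

lemma ker_lowering_pow_two_inf_symmetricCoords [NoZeroDivisors R] (h2 : (2 : R) ≠ 0) :
    LinearMap.ker (lowering R ^ 2) ⊓ symmetricCoords R =
      (⊥ : Submodule R R).prod
        ((symmetricMatrices (Fin 3) R ⊓ LinearMap.ker (traceLinearMap (Fin 3) R R)).prod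
          ((symmetricMatrices (Fin 3) R).prod ⊤)) := by
  have := nontrivial_of_ne _ _ h2
  ext ⟨t, M, P, u⟩
  simp only [symmetricCoords, Submodule.mem_inf, LinearMap.mem_ker, lowering_pow_two_apply,
    Prod.mk_eq_zero, smul_eq_zero, mul_eq_zero, h2, false_or, one_ne_zero, or_false, true_and,
    Submodule.mem_prod, Submodule.mem_top, and_true, Submodule.mem_bot, traceLinearMap_apply]
  tauto

lemma ker_lowering_pow_three_inf_symmetricCoords [NoZeroDivisors R] (h6 : (6 : R) ≠ 0) :
    LinearMap.ker (lowering R ^ 3) ⊓ symmetricCoords R =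
      (⊥ : Submodule R R).prod
        ((symmetricMatrices (Fin 3) R).prod ((symmetricMatrices (Fin 3) R).prod ⊤)) := by
  ext ⟨t, M, P, u⟩
  simp [symmetricCoords, lowering_pow_three_apply, Submodule.mem_prod, h6]

variable {K : Type*} [Field K]

lemma finrank_symmetricCoords : finrank K (symmetricCoords K) = 14 := by
  rw [symmetricCoords, finrank_submodule_prod, finrank_submodule_prod, finrank_submodule_prod,
    finrank_symmetricMatrices, finrank_top, finrank_self]
  rfl

theorem finrank_ker_lowering_pow_inf_symmetricCoords (h6 : (6 : K) ≠ 0) (p : ℕ) :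
    finrank K (LinearMap.ker (lowering K ^ p) ⊓ symmetricCoords K : Submodule K (Coords K)) =
      min p 4 + 5 * min p 2 := by
  have h2 : (2 : K) ≠ 0 := fun h ↦ h6 (by linear_combination 3 * h)
  have finrank_symmetric : finrank K (symmetricMatrices (Fin 3) K) = 6 :=
    finrank_symmetricMatrices ..
  have finrank_traceless : finrank K (symmetricMatrices (Fin 3) K ⊓
      LinearMap.ker (traceLinearMap (Fin 3) K K) : Submodule K _) = 5 := by
    rw [← Nat.add_right_cancel_iff, finrank_symmetricMatrices_inf_ker_trace, finrank_symmetric]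
  match p with
  | 0 => simp [Module.End.one_eq_id]
  | 1 =>
    rw [pow_one, ker_lowering_inf_symmetricCoords h2]
    simp [finrank_submodule_prod, finrank_traceless]
  | 2 =>
    rw [ker_lowering_pow_two_inf_symmetricCoords h2]
    simp [finrank_submodule_prod, finrank_symmetric, finrank_traceless]
  | 3 =>
    rw [ker_lowering_pow_three_inf_symmetricCoords h6]
    simp [finrank_submodule_prod, finrank_symmetric]
  | p + 4 =>
    rw [pow_add, lowering_pow_four, mul_zero, LinearMap.ker_zero, top_inf_eq,
      finrank_symmetricCoords]
    lia

end JordanType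

end Coordinates

end SymplecticThreeForm

open Module SymplecticThreeForm in
theorem genus9_jordan_type_orbit_two_cubed_general {K V : Type*} [Field K] [AddCommGroup V]
    [Module K V] (h6 : (6 : K) ≠ 0) (e : Basis (Fin 3 ⊕ Fin 3) K V)
    (W : Submodule K (⋀[K]^3 V))
    (hW : W = LinearMap.ker
      ((LinearMap.mulLeft K (symplecticForm K (e ∘ Sum.inl) (e ∘ Sum.inr))).comp
        (Submodule.subtype (⋀[K]^3 V))))
    (X : End K V) (hXa : ∀ i, X (e (Sum.inl i)) = 0)
    (hXb : ∀ i, X (e (Sum.inr i)) = e (Sum.inl i))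
    (D : End K (⋀[K]^3 V)) (hD : IsDerivationExtension X D) :
    finrank K W = 14 ∧
      ∃ hinv : ∀ x ∈ W, D x ∈ W,
        IsNilpotent (D.restrict hinv) ∧
          ∀ p : ℕ, finrank K (LinearMap.ker (D.restrict hinv ^ p)) = min p 4 + 5 * min p 2 := by
  have D_eq : D = (threeFormEquiv e).conjRingEquiv (lowering K) := by
    refine LinearMap.ext fun y ↦ ?_
    obtain ⟨x, rfl⟩ := (threeFormEquiv e).surjective y
    rw [LinearEquiv.conjRingEquiv_apply_apply, LinearEquiv.symm_apply_apply]
    exact hD.apply_threeForm hXa hXb x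
  have comap_W : W.comap (threeFormEquiv e).toLinearMap = symmetricCoords K := by
    ext x
    rw [hW, mem_symmetricCoords]
    exact symplecticForm_mul_threeForm_eq_zero_iff e
  have D_mem : ∀ y ∈ W, D y ∈ W := by
    intro y hy
    obtain ⟨x, rfl⟩ := (threeFormEquiv e).surjective y
    have hx : x ∈ symmetricCoords K := comap_W ▸ hy
    rw [D_eq, LinearEquiv.conjRingEquiv_apply_apply, LinearEquiv.symm_apply_apply]
    have lowering_mem := lowering_mem_symmetricCoords hx
    rwa [← comap_W] at lowering_mem
  subst D_eq
  refine ⟨?_, D_mem, ?_, fun p ↦ ?_⟩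
  · rw [← finrank_comap_equiv (threeFormEquiv e), comap_W, finrank_symmetricCoords]
  · exact Module.End.isNilpotent.restrict D_mem
      (IsNilpotent.map ⟨4, lowering_pow_four⟩ (threeFormEquiv e).conjRingEquiv)
  · rw [finrank_ker_restrict_conj_pow, comap_W, finrank_ker_lowering_pow_inf_symmetricCoords h6]

open ExteriorAlgebra in
/-- Genus 9, nilpotent orbit `O_{[2³]}`: the representative `X_{[2³]}` of `sp₆` acts on
the 14-dimensional module `∧^⟨3⟩ℂ⁶ = ker(w ∧ ·) ⊆ ⋀³ℂ⁶` as a nilpotent operator of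
Jordan type `(4, 2, 2, 2, 2, 2)`. -/
theorem genus9_jordan_type_orbit_two_cubed
    (e : Fin 6 → (Fin 6 → ℂ)) (he : e = fun i => Pi.single i 1)
    (w : ExteriorAlgebra ℂ (Fin 6 → ℂ))
    (hw : w = ι ℂ (e 0) * ι ℂ (e 5) + ι ℂ (e 1) * ι ℂ (e 4) + ι ℂ (e 2) * ι ℂ (e 3))
    (W : Submodule ℂ (⋀[ℂ]^3 (Fin 6 → ℂ)))
    (hWdef : W = LinearMap.ker
      ((LinearMap.mulLeft ℂ w).comp (Submodule.subtype (⋀[ℂ]^3 (Fin 6 → ℂ)))))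
    (X : Module.End ℂ (Fin 6 → ℂ))
    (hX0 : X (e 0) = 0) (hX1 : X (e 1) = 0) (hX2 : X (e 2) = 0)
    (hX3 : X (e 3) = e 2) (hX4 : X (e 4) = e 1) (hX5 : X (e 5) = e 0)
    (D : Module.End ℂ (⋀[ℂ]^3 (Fin 6 → ℂ)))
    (hD : ∀ v : Fin 3 → (Fin 6 → ℂ),
      (D ⟨ιMulti ℂ 3 v, ιMulti_range ℂ 3 ⟨v, rfl⟩⟩ : ⋀[ℂ]^3 (Fin 6 → ℂ)) =
        ∑ i : Fin 3, ιMulti ℂ 3 (Function.update v i (X (v i)))) :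
    Module.finrank ℂ W = 14 ∧
      ∃ hinv : ∀ x ∈ W, D x ∈ W,
        IsNilpotent (D.restrict hinv) ∧
          ∀ p : ℕ, Module.finrank ℂ (LinearMap.ker ((D.restrict hinv) ^ p)) =
            min p 4 + 5 * min p 2 := by
  subst he
  -- The first triple is `e 0, e 1, e 2` and the second one `e 5, e 4, e 3`.
  let σ : Fin 6 ≃ Fin 3 ⊕ Fin 3 :=
    (finSumFinEquiv (m := 3) (n := 3)).symm.trans ((Equiv.refl _).sumCongr Fin.revPerm)
  let B := (Pi.basisFun ℂ (Fin 6)).reindex σ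
  have hB (k : Fin 3 ⊕ Fin 3) : B k = Pi.single (σ.symm k) 1 := by
    rw [Module.Basis.reindex_apply, Pi.basisFun_apply]
  refine genus9_jordan_type_orbit_two_cubed_general (by norm_num) B W ?_ X ?_ ?_ D
    fun v ↦ Subtype.ext ?_
  · rw [hWdef, hw, SymplecticThreeForm.symplecticForm, Fin.sum_univ_three]
    simp only [Function.comp_apply, hB]
    rfl
  · simp only [hB]
    exact Fin.forall_fin_succ.2 ⟨hX0, Fin.forall_fin_two.2 ⟨hX1, hX2⟩⟩
  · simp only [hB]
    exact Fin.forall_fin_succ.2 ⟨hX5, Fin.forall_fin_two.2 ⟨hX4, hX3⟩⟩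
  · exact (hD v).trans (by simp)
end

section
/- Let V = ℂ⁶ with basis e₁, e₂, e₃, f₁, f₂, f₃, and for x, y₁, y₂, y₃ ∈ ℂ define the elements of ⋀³V: p = x·e₁∧e₂∧e₃ + y₁·e₁∧f₂∧f₃ + y₂·f₁∧e₂∧f₃ + y₃·f₁∧f₂∧e₃ and p' = x·f₁∧f₂∧f₃ + y₁·f₁∧e₂∧e₃ + y₂·e₁∧f₂∧e₃ + y₃·e₁∧e₂∧f₃. Let t be the linear automorphism of V with t(e_j) = f_j and t(f_j) = −e_j for j = 1, 2, 3, and let s be the linear automorphism with s(e_j) = i·e_j and s(f_j) = −i·f_j, where i² = −1. Then (⋀³t)(p) = p', (⋀³t)(p') = −p, (⋀³s)(p) = −i·p, and (⋀³s)(p') = i·p'. In particular the subspace of ⋀³V spanned by p and p' is invariant under both ⋀³s and ⋀³t. -/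
/-! All four identities are instances of one scaling law. The element `p'` is `p` with the
families `e` and `f` exchanged, and each of `t`, `s` carries the pair `(e, f)` to `(f, e)` or
`(e, f)` up to scalars `a`, `b` with `a² = b²`. The two types of monomials in `p` are then scaled
by `a³` and `a b²`, which agree. -/

open Function

section Span

variable {R M N : Type*} [Semiring R] [AddCommMonoid M] [Module R M] [AddCommMonoid N] [Module R N]

theorem map_span_pair_le_iff {g : M →ₗ[R] N} {u v : M} {K : Submodule R N} :
    Submodule.map g (Submodule.span R {u, v}) ≤ K ↔ g u ∈ K ∧ g v ∈ K := by
  simp [Submodule.map_span_le]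

end Span

section AlternatingMap

variable {R M N ι : Type*} [CommSemiring R] [AddCommMonoid M] [Module R M] [AddCommMonoid N]
  [Module R N] [Fintype ι]

theorem alternatingMap_const_smul (φ : M [⋀^ι]→ₗ[R] N) (a : R) (v : ι → M) :
    φ (a • v) = a ^ Fintype.card ι • φ v :=
  (φ.toMultilinearMap.map_smul_univ (fun _ ↦ a) v).trans (by simp)

theorem alternatingMap_update_smul_smul [DecidableEq ι] (φ : M [⋀^ι]→ₗ[R] N) (a b : R)
    (v : ι → M) (j : ι) (w : M) :
    φ (update (b • v) j (a • w)) = (b ^ (Fintype.card ι - 1) * a) • φ (update v j w) := by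
  rw [mul_smul, ← φ.map_update_smul]
  exact φ.toMultilinearMap.map_update_smul_left v j b (a • w)

end AlternatingMap

section DiagMultivector

variable {R M N : Type*} [CommRing R] [AddCommGroup M] [Module R M] [AddCommGroup N] [Module R N]
variable {n : ℕ}

/-- The multivector `x • e₀ ∧ ⋯ ∧ eₙ + ∑ⱼ yⱼ • f₀ ∧ ⋯ ∧ eⱼ ∧ ⋯ ∧ fₙ` attached to two families of
`n + 1` vectors, where in the `j`-th summand `eⱼ` replaces `fⱼ`. For `n = 2` it gives the element
`p` of the paper, and `p'` once `e` and `f` are exchanged. -/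
def diagMultivector (x : R) (y : Fin (n + 1) → R) (e f : Fin (n + 1) → M) :
    ExteriorAlgebra R M :=
  x • ExteriorAlgebra.ιMulti R (n + 1) e +
    ∑ j, y j • ExteriorAlgebra.ιMulti R (n + 1) (update f j (e j))

open ExteriorAlgebra in
theorem diagMultivector_fin_three (x y₁ y₂ y₃ : R) (e f : Fin 3 → M) :
    diagMultivector x ![y₁, y₂, y₃] e f =
      x • (ι R (e 0) * ι R (e 1) * ι R (e 2)) +
        y₁ • (ι R (e 0) * ι R (f 1) * ι R (f 2)) +
        y₂ • (ι R (f 0) * ι R (e 1) * ι R (f 2)) +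
        y₃ • (ι R (f 0) * ι R (f 1) * ι R (e 2)) := by
  simp [diagMultivector, ιMulti_apply, -ιMulti_succ_apply, List.ofFn_succ, Fin.sum_univ_three,
    mul_assoc, add_assoc]

theorem map_diagMultivector (g : M →ₗ[R] N) (x : R) (y : Fin (n + 1) → R)
    (e f : Fin (n + 1) → M) :
    ExteriorAlgebra.map g (diagMultivector x y e f) = diagMultivector x y (g ∘ e) (g ∘ f) := by
  simp only [diagMultivector, map_add, map_sum, map_smul, ExteriorAlgebra.map_apply_ιMulti,
    comp_update, comp_apply]

theorem diagMultivector_smul_smul {a b : R} (hab : a ^ n = b ^ n) (x : R) (y : Fin (n + 1) → R)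
    (e f : Fin (n + 1) → M) :
    diagMultivector x y (a • e) (b • f) = a ^ (n + 1) • diagMultivector x y e f := by
  simp only [diagMultivector, alternatingMap_const_smul, Pi.smul_apply,
    alternatingMap_update_smul_smul, Fintype.card_fin, Nat.add_sub_cancel, ← hab, ← pow_succ,
    smul_add, Finset.smul_sum, smul_comm (a ^ (n + 1))]

theorem map_diagMultivector_of_smul {g : M →ₗ[R] N} {a b : R} {e f : Fin (n + 1) → M}
    {e' f' : Fin (n + 1) → N} (hab : a ^ n = b ^ n) (he : ∀ j, g (e j) = a • e' j)
    (hf : ∀ j, g (f j) = b • f' j) (x : R) (y : Fin (n + 1) → R) :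
    ExteriorAlgebra.map g (diagMultivector x y e f) =
      a ^ (n + 1) • diagMultivector x y e' f' := by
  have hge : g ∘ e = a • e' := funext he
  have hgf : g ∘ f = b • f' := funext hf
  rw [map_diagMultivector, hge, hgf, diagMultivector_smul_smul hab]

end DiagMultivector

open ExteriorAlgebra in
theorem genus9_action_on_p_pprime_general {R M : Type*} [CommRing R] [AddCommGroup M] [Module R M]
    (e f : Fin 3 → M) (x y₁ y₂ y₃ : R) (p p' : ExteriorAlgebra R M)
    (hp : p = x • (ι R (e 0) * ι R (e 1) * ι R (e 2)) +
        y₁ • (ι R (e 0) * ι R (f 1) * ι R (f 2)) +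
        y₂ • (ι R (f 0) * ι R (e 1) * ι R (f 2)) +
        y₃ • (ι R (f 0) * ι R (f 1) * ι R (e 2)))
    (hp' : p' = x • (ι R (f 0) * ι R (f 1) * ι R (f 2)) +
        y₁ • (ι R (f 0) * ι R (e 1) * ι R (e 2)) +
        y₂ • (ι R (e 0) * ι R (f 1) * ι R (e 2)) +
        y₃ • (ι R (e 0) * ι R (e 1) * ι R (f 2)))
    (t s : Module.End R M) {i : R} (hi : i ^ 2 = -1)
    (ht : ∀ j, t (e j) = f j ∧ t (f j) = -e j)
    (hs : ∀ j, s (e j) = i • e j ∧ s (f j) = -(i • f j)) :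
    ExteriorAlgebra.map t p = p' ∧
    ExteriorAlgebra.map t p' = -p ∧
    ExteriorAlgebra.map s p = -(i • p) ∧
    ExteriorAlgebra.map s p' = i • p' ∧
    Submodule.map (ExteriorAlgebra.map s).toLinearMap (Submodule.span R {p, p'}) ≤
      Submodule.span R {p, p'} ∧
    Submodule.map (ExteriorAlgebra.map t).toLinearMap (Submodule.span R {p, p'}) ≤
      Submodule.span R {p, p'} := by
  rw [← diagMultivector_fin_three] at hp hp'
  have te (j) : t (e j) = (1 : R) • f j := by simp [ht]
  have tf (j) : t (f j) = (-1 : R) • e j := by simp [ht]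
  have se (j) : s (e j) = i • e j := (hs j).1
  have sf (j) : s (f j) = (-i) • f j := by simp [hs]
  have i_cubed : i ^ 3 = -i := by linear_combination i * hi
  have tp : ExteriorAlgebra.map t p = p' := by
    simpa [← hp, ← hp'] using map_diagMultivector_of_smul (by simp) te tf x ![y₁, y₂, y₃]
  have tp' : ExteriorAlgebra.map t p' = -p := by
    simpa [← hp, ← hp', Odd.neg_pow (show Odd 3 by decide)] using
      map_diagMultivector_of_smul (by simp) tf te x ![y₁, y₂, y₃]
  have sp : ExteriorAlgebra.map s p = -(i • p) := by
    simpa [← hp, i_cubed] using map_diagMultivector_of_smul (by simp) se sf x ![y₁, y₂, y₃]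
  have sp' : ExteriorAlgebra.map s p' = i • p' := by
    simpa [← hp', Odd.neg_pow (show Odd 3 by decide), i_cubed] using
      map_diagMultivector_of_smul (by simp) sf se x ![y₁, y₂, y₃]
  have p_mem : p ∈ Submodule.span R {p, p'} := Submodule.mem_span_of_mem (by simp)
  have p'_mem : p' ∈ Submodule.span R {p, p'} := Submodule.mem_span_of_mem (by simp)
  refine ⟨tp, tp', sp, sp', map_span_pair_le_iff.2 ?_, map_span_pair_le_iff.2 ?_⟩
  · simpa [sp, sp'] using ⟨Submodule.smul_mem _ i p_mem, Submodule.smul_mem _ i p'_mem⟩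
  · simpa [tp, tp'] using ⟨p'_mem, p_mem⟩

open ExteriorAlgebra in
/-- Genus 9 (Proposition 5.3, constructive step): the symplectic anti-involutions
`s = i(Id_E − Id_F)` and `t` (with `t e_j = f_j`, `t f_j = −e_j`) act on the elements
`p, p'` of `⋀³ℂ⁶` by `(⋀³t)(p) = p'`, `(⋀³t)(p') = −p`, `(⋀³s)(p) = −i·p`,
`(⋀³s)(p') = i·p'`; in particular the span of `p, p'` is invariant under `⋀³s` and `⋀³t`. -/
theorem genus9_action_on_p_pprime
    (e f : Fin 3 → (Fin 6 → ℂ))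
    (he : ∀ j : Fin 3, e j = Pi.single (Fin.castLE (by norm_num) j) 1)
    (hf : ∀ j : Fin 3, f j = Pi.single (Fin.castLE (by norm_num) j + 3) 1)
    (x y₁ y₂ y₃ : ℂ)
    (p p' : ExteriorAlgebra ℂ (Fin 6 → ℂ))
    (hp : p = x • (ι ℂ (e 0) * ι ℂ (e 1) * ι ℂ (e 2)) +
        y₁ • (ι ℂ (e 0) * ι ℂ (f 1) * ι ℂ (f 2)) +
        y₂ • (ι ℂ (f 0) * ι ℂ (e 1) * ι ℂ (f 2)) +
        y₃ • (ι ℂ (f 0) * ι ℂ (f 1) * ι ℂ (e 2)))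
    (hp' : p' = x • (ι ℂ (f 0) * ι ℂ (f 1) * ι ℂ (f 2)) +
        y₁ • (ι ℂ (f 0) * ι ℂ (e 1) * ι ℂ (e 2)) +
        y₂ • (ι ℂ (e 0) * ι ℂ (f 1) * ι ℂ (e 2)) +
        y₃ • (ι ℂ (e 0) * ι ℂ (e 1) * ι ℂ (f 2)))
    (t s : Module.End ℂ (Fin 6 → ℂ))
    (ht : ∀ j : Fin 3, t (e j) = f j ∧ t (f j) = -e j)
    (hs : ∀ j : Fin 3, s (e j) = Complex.I • e j ∧ s (f j) = -(Complex.I • f j)) :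
    ExteriorAlgebra.map t p = p' ∧
    ExteriorAlgebra.map t p' = -p ∧
    ExteriorAlgebra.map s p = -(Complex.I • p) ∧
    ExteriorAlgebra.map s p' = Complex.I • p' ∧
    Submodule.map (ExteriorAlgebra.map s).toLinearMap (Submodule.span ℂ {p, p'}) ≤
      Submodule.span ℂ {p, p'} ∧
    Submodule.map (ExteriorAlgebra.map t).toLinearMap (Submodule.span ℂ {p, p'}) ≤
      Submodule.span ℂ {p, p'} :=
  genus9_action_on_p_pprime_general e f x y₁ y₂ y₃ p p' hp hp' t s Complex.I_sq ht hs
end
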